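/- Under the Pólya urn hypotheses, let p ≥ 2 and assume sup_n ‖X_{n+1} − X_n‖_p < ∞. List the eigenvalues λ₁, …, λ_q of A with algebraic multiplicity, ordered so that Re λ₁ ≥ Re λ₂ ≥ … and, among eigenvalues of equal real part, by decreasing ν_λ; assume λ₁ = b. Then there is a constant C (depending on the data and p but not on n) such that for every n ≥ 2: ‖X_n − E X_n‖_p ≤ C n^{1/2} if Re λ₂ < b/2; ‖X_n − E X_n‖_p ≤ C n^{1/2} (log n)^{ν_{λ₂} + 1/2} if Re λ₂ = b/2; and ‖X_n − E X_n‖_p ≤ C n^{Re λ₂ / b} (log n)^{ν_{λ₂}} if Re λ₂ > b/2. -/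

import Mathlib

open MeasureTheory Matrix Filter

/-- `P` is the spectral projection of `A` for the eigenvalue `lam`: it is the identity
on the generalized eigenspace E_lam = ker((A − lam I)^q) and vanishes on the generalized
eigenspace E_mu = ker((A − mu I)^q) of every other eigenvalue `mu`. Since ℂ^q is the
direct sum of the generalized eigenspaces, these conditions determine `P` uniquely. -/
def IsSpectralProj {q : ℕ} (A : Matrix (Fin q) (Fin q) ℂ) (lam : ℂ)
    (P : Matrix (Fin q) (Fin q) ℂ) : Prop :=
  (∀ v : Fin q → ℂ, ((A - lam • 1) ^ q).mulVec v = 0 → P.mulVec v = v) ∧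
  ∀ mu : ℂ, mu ≠ lam → ∀ v : Fin q → ℂ, ((A - mu • 1) ^ q).mulVec v = 0 → P.mulVec v = 0

/-- `ν` is the nilpotency index ν_lam of N_lam := (A − lam I) P_lam, i.e. the unique
integer ν ≥ 0 with N_lam^(ν+1) = 0 and (ν = 0 or N_lam^ν ≠ 0). -/
def NilIndexOf {q : ℕ} (A : Matrix (Fin q) (Fin q) ℂ) (lam : ℂ)
    (P : Matrix (Fin q) (Fin q) ℂ) (ν : ℕ) : Prop :=
  ((A - lam • 1) * P) ^ (ν + 1) = 0 ∧ (ν = 0 ∨ ((A - lam • 1) * P) ^ ν ≠ 0)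

/-- `mu` is a candidate for the second eigenvalue λ₂ in the ordered listing
λ₁, λ₂, …, λ_q of the eigenvalues of `Ac` with algebraic multiplicity (λ₁ = b being
first): either `mu` is an eigenvalue different from b, or `mu = b` and b occurs with
algebraic multiplicity at least 2. -/
def MemSecondEigSet {q : ℕ} (Ac : Matrix (Fin q) (Fin q) ℂ) (b : ℝ) (mu : ℂ) : Prop :=
  (mu ≠ (b : ℂ) ∧ mu ∈ spectrum ℂ Ac) ∨
  (mu = (b : ℂ) ∧ 2 ≤ Polynomial.rootMultiplicity (b : ℂ) (Matrix.charpoly Ac))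

/-!
With `c_j = (w₀ + j b)⁻¹`, condition (ii) makes `X_n - E X_n` a sum of martingale differences
`∏_{k < j < n} (1 + c_j A) ξ_k`, where `ξ_k` is the increment after time `k` minus its conditional
mean. Conditioning costs only a constant in the 2-smoothness of `L^p`, so the squared `L^p` norm of
the sum is at most a constant times the sum of the squared `L^p` norms of the terms. By balance
`a · ξ_k = 0`. The kernel of `a` consists of generalized eigenvectors for the candidates for `λ₂`,
because `a` is a left eigenvector for `b`; so the product applied to `ξ_k` has size
`O((n / k) ^ (Re λ₂ / b) (log n) ^ ν)`. The three regimes are those of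
`∑_{k ≤ n} (n / k) ^ (2 Re λ₂ / b)`.
-/

section SecondOrderExpansion

theorem rpow_sub_two_mul_sq {x p : ℝ} (hx : 0 ≤ x) (hp : p ≠ 0) :
    x ^ (p - 2) * x ^ 2 = x ^ p := by
  have h := Real.rpow_add_natCast' hx (y := p - 2) (n := 2) (by simpa using hp)
  simpa using h.symm

theorem rpow_sub_two_mul_self {x p : ℝ} (hx : 0 ≤ x) (hp : p ≠ 1) :
    x ^ (p - 2) * x = x ^ (p - 1) := by
  have h := Real.rpow_add_natCast' hx (y := p - 2) (n := 1)
    (by contrapose! hp; push_cast at hp; linarith)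
  rw [show p - 2 + (1 : ℕ) = p - 1 by push_cast; ring] at h
  simpa using h.symm

theorem rpow_eq_sq_rpow_half {x : ℝ} (hx : 0 ≤ x) (p : ℝ) : x ^ p = (x ^ 2) ^ (p / 2) := by
  rw [← Real.rpow_natCast_mul hx, Nat.cast_ofNat, mul_div_cancel₀ p two_ne_zero]

theorem one_add_rpow_le_of_abs_mul_le_one {s t : ℝ} (hs : 0 ≤ s) (ht : 0 ≤ 1 + t)
    (hst : |s * t| ≤ 1) : (1 + t) ^ s ≤ 1 + s * t + (s * t) ^ 2 := by
  have hexp : (1 + t) ^ s ≤ Real.exp (s * t) := by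
    rw [mul_comm, Real.exp_mul]
    gcongr
    linarith [Real.add_one_le_exp t]
  linarith [(abs_le.1 (Real.abs_exp_sub_one_sub_id_le hst)).2]

variable {E : Type*} [NormedAddCommGroup E] [InnerProductSpace ℝ E] {p : ℝ}

theorem norm_add_rpow_le_of_norm_right_lt (hp : 2 ≤ p) {x y : E}
    (hxy : 3 * p / 2 * ‖y‖ < ‖x‖) :
    ‖x + y‖ ^ p ≤ ‖x‖ ^ p + p * (‖x‖ ^ (p - 2) * inner ℝ x y)
      + (9 * p ^ 2 + p) * (‖x‖ ^ (p - 2) * ‖y‖ ^ 2) := by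
  have hx : 0 < ‖x‖ := lt_of_le_of_lt (by positivity) hxy
  have hyx : ‖y‖ ≤ ‖x‖ := by nlinarith [norm_nonneg y]
  -- The expansion is that of `(‖x‖² (1 + t)) ^ (p / 2)` to second order in `t`.
  set t : ℝ := (2 * inner ℝ x y + ‖y‖ ^ 2) / ‖x‖ ^ 2 with ht
  have htx : t * ‖x‖ ^ 2 = 2 * inner ℝ x y + ‖y‖ ^ 2 := by rw [ht]; field_simp
  have hsq : ‖x + y‖ ^ 2 = ‖x‖ ^ 2 * (1 + t) := by rw [norm_add_sq_real]; linarith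
  have h1t : 0 ≤ 1 + t := nonneg_of_mul_nonneg_right (hsq ▸ sq_nonneg _) (by positivity)
  have htabs : |t| * ‖x‖ ≤ 3 * ‖y‖ := by
    refine le_of_mul_le_mul_right ?_ hx
    calc |t| * ‖x‖ * ‖x‖ = |2 * inner ℝ x y + ‖y‖ ^ 2| := by
          rw [← htx, abs_mul, abs_of_nonneg (sq_nonneg ‖x‖)]; ring
      _ ≤ 3 * ‖y‖ * ‖x‖ := by
          obtain ⟨h1, h2⟩ := abs_le.1 (abs_real_inner_le_norm x y)
          rw [abs_le]
          constructor <;> nlinarith [norm_nonneg y, hyx]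
  have hpt : |p / 2 * t| ≤ 1 := by
    rw [abs_mul, abs_of_nonneg (by linarith)]
    refine le_of_mul_le_mul_right ?_ hx
    nlinarith
  have ht2 : t ^ 2 * ‖x‖ ^ 2 ≤ 9 * ‖y‖ ^ 2 := by
    rw [← sq_abs t]
    nlinarith [mul_self_le_mul_self (by positivity) htabs]
  have hsplit := rpow_sub_two_mul_sq hx.le (p := p) (by linarith)
  calc ‖x + y‖ ^ p = ‖x‖ ^ p * (1 + t) ^ (p / 2) := by
        rw [rpow_eq_sq_rpow_half (norm_nonneg (x + y)), rpow_eq_sq_rpow_half hx.le, hsq,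
          Real.mul_rpow (by positivity) h1t]
    _ ≤ ‖x‖ ^ p * (1 + p / 2 * t + (p / 2 * t) ^ 2) := by
        gcongr
        exact one_add_rpow_le_of_abs_mul_le_one (by linarith) h1t hpt
    _ = ‖x‖ ^ p + p / 2 * ‖x‖ ^ (p - 2) * (t * ‖x‖ ^ 2)
          + p ^ 2 / 4 * ‖x‖ ^ (p - 2) * (t ^ 2 * ‖x‖ ^ 2) := by rw [← hsplit]; ring
    _ ≤ ‖x‖ ^ p + p / 2 * ‖x‖ ^ (p - 2) * (2 * inner ℝ x y + ‖y‖ ^ 2)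
          + p ^ 2 / 4 * ‖x‖ ^ (p - 2) * (9 * ‖y‖ ^ 2) := by rw [htx]; gcongr
    _ ≤ _ := by
        have hnonneg : 0 ≤ ‖x‖ ^ (p - 2) * ‖y‖ ^ 2 := by positivity
        nlinarith [mul_nonneg (sq_nonneg p) hnonneg]

theorem norm_add_rpow_le_of_norm_left_le (hp : 2 ≤ p) {K : ℝ} (hK : 0 ≤ K) {x y : E}
    (hxy : ‖x‖ ≤ K * ‖y‖) :
    ‖x + y‖ ^ p ≤ p * (‖x‖ ^ (p - 2) * inner ℝ x y)
      + ((1 + K) ^ p + p * K ^ (p - 1)) * ‖y‖ ^ p := by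
  have hsum : ‖x + y‖ ^ p ≤ (1 + K) ^ p * ‖y‖ ^ p := by
    rw [← Real.mul_rpow (by positivity) (norm_nonneg y)]
    gcongr
    linarith [norm_add_le x y]
  have hcross : ‖x‖ ^ (p - 2) * (‖x‖ * ‖y‖) ≤ K ^ (p - 1) * ‖y‖ ^ p := by
    have hp1 : p ≠ 1 := by linarith
    have hmono : ‖x‖ ^ (p - 1) ≤ (K * ‖y‖) ^ (p - 1) := by gcongr; linarith
    rw [Real.mul_rpow hK (norm_nonneg y), ← rpow_sub_two_mul_self (norm_nonneg x) hp1,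
      ← rpow_sub_two_mul_self (norm_nonneg y) hp1] at hmono
    rw [← rpow_sub_two_mul_sq (norm_nonneg y) (by linarith : p ≠ 0)]
    nlinarith [norm_nonneg y]
  have hinner : -(‖x‖ ^ (p - 2) * (‖x‖ * ‖y‖)) ≤ ‖x‖ ^ (p - 2) * inner ℝ x y := by
    rw [← mul_neg]
    gcongr
    exact (abs_le.1 (abs_real_inner_le_norm x y)).1
  nlinarith

theorem exists_norm_add_rpow_le (hp : 2 ≤ p) : ∃ C : ℝ, 1 ≤ C ∧ ∀ x y : E,
    ‖x + y‖ ^ p ≤ ‖x‖ ^ p + p * (‖x‖ ^ (p - 2) * inner ℝ x y)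
      + C * (‖x‖ ^ (p - 2) * ‖y‖ ^ 2 + ‖y‖ ^ p) := by
  set K : ℝ := 3 * p / 2
  have hK : 0 ≤ K := by positivity
  set B : ℝ := (1 + K) ^ p + p * K ^ (p - 1)
  have hB : 0 ≤ B := by positivity
  refine ⟨9 * p ^ 2 + p + B, by nlinarith, fun x y => ?_⟩
  have hxp : 0 ≤ ‖x‖ ^ p := by positivity
  have hyp : 0 ≤ ‖y‖ ^ p := by positivity
  have hxy : 0 ≤ ‖x‖ ^ (p - 2) * ‖y‖ ^ 2 := by positivity
  have hp2 : 0 ≤ 9 * p ^ 2 + p := by positivity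
  rcases le_or_gt ‖x‖ (K * ‖y‖) with h | h
  · nlinarith [norm_add_rpow_le_of_norm_left_le hp hK h, mul_nonneg hp2 hxy, mul_nonneg hp2 hyp]
  · nlinarith [norm_add_rpow_le_of_norm_right_lt hp h, mul_nonneg hp2 hyp]

end SecondOrderExpansion

section ConditionalTwoSmoothness

variable {Ω E F : Type*} {m m0 : MeasurableSpace Ω} {μ : Measure Ω}
  [NormedAddCommGroup E] [NormedAddCommGroup F]

theorem lpNorm_rpow_eq_integral_norm_rpow {p : ℝ} (hp : 0 < p) {f : Ω → E}
    (hf : AEStronglyMeasurable f μ) :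
    lpNorm f (ENNReal.ofReal p) μ ^ p = ∫ ω, ‖f ω‖ ^ p ∂μ := by
  have hint : 0 ≤ ∫ ω, ‖f ω‖ ^ p ∂μ := integral_nonneg fun ω => by positivity
  rw [lpNorm_eq_integral_norm_rpow_toReal (by simpa using hp) ENNReal.ofReal_ne_top hf,
    ENNReal.toReal_ofReal hp.le, Real.rpow_inv_rpow hint hp.ne']

theorem eLpNorm_ofReal_rpow_eq_lintegral {p : ℝ} (hp : 0 < p) (f : Ω → E) (r : ℝ) :
    eLpNorm f (ENNReal.ofReal p) μ ^ r = (∫⁻ ω, ‖f ω‖ₑ ^ p ∂μ) ^ (r / p) := by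
  rw [eLpNorm_eq_lintegral_rpow_enorm_toReal (by simpa using hp) ENNReal.ofReal_ne_top,
    ENNReal.toReal_ofReal hp.le, ← ENNReal.rpow_mul, one_div_mul_eq_div]

theorem lintegral_enorm_rpow_mul_enorm_rpow_le {r s p : ℝ} (hr : 0 ≤ r) (hs : 0 ≤ s) (hp : 0 < p)
    (hrs : r + s = p) {f : Ω → E} {g : Ω → F} (hf : AEStronglyMeasurable f μ)
    (hg : AEStronglyMeasurable g μ) :
    ∫⁻ ω, ‖f ω‖ₑ ^ r * ‖g ω‖ₑ ^ s ∂μ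
      ≤ eLpNorm f (ENNReal.ofReal p) μ ^ r * eLpNorm g (ENNReal.ofReal p) μ ^ s := by
  have hpow : ∀ (x : ENNReal) (u : ℝ), x ^ u = (x ^ p) ^ (u / p) := fun x u => by
    rw [← ENNReal.rpow_mul, mul_div_cancel₀ u hp.ne']
  simp only [eLpNorm_ofReal_rpow_eq_lintegral hp]
  calc ∫⁻ ω, ‖f ω‖ₑ ^ r * ‖g ω‖ₑ ^ s ∂μ
      = ∫⁻ ω, (‖f ω‖ₑ ^ p) ^ (r / p) * (‖g ω‖ₑ ^ p) ^ (s / p) ∂μ := by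
        simp only [← hpow]
    _ ≤ _ := ENNReal.lintegral_mul_norm_pow_le (hf.enorm.pow_const p) (hg.enorm.pow_const p)
        (by positivity) (by positivity) (by rw [← add_div, hrs, div_self hp.ne'])

theorem ofReal_norm_rpow_mul_norm_rpow {r s : ℝ} (hr : 0 ≤ r) (hs : 0 ≤ s) (x : E) (y : F) :
    ENNReal.ofReal (‖x‖ ^ r * ‖y‖ ^ s) = ‖x‖ₑ ^ r * ‖y‖ₑ ^ s := by
  rw [ENNReal.ofReal_mul (by positivity), ← ENNReal.ofReal_rpow_of_nonneg (norm_nonneg x) hr,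
    ← ENNReal.ofReal_rpow_of_nonneg (norm_nonneg y) hs, ofReal_norm, ofReal_norm]

theorem integrable_norm_rpow_mul_norm_rpow {r s p : ℝ} (hr : 0 ≤ r) (hs : 0 ≤ s) (hp : 0 < p)
    (hrs : r + s = p) {f : Ω → E} {g : Ω → F} (hf : MemLp f (ENNReal.ofReal p) μ)
    (hg : MemLp g (ENNReal.ofReal p) μ) :
    Integrable (fun ω => ‖f ω‖ ^ r * ‖g ω‖ ^ s) μ := by
  refine ⟨((hf.1.norm.aemeasurable.pow_const r).mul
    (hg.1.norm.aemeasurable.pow_const s)).aestronglyMeasurable, ?_⟩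
  rw [hasFiniteIntegral_iff_ofReal (ae_of_all _ fun ω => by positivity)]
  simp only [ofReal_norm_rpow_mul_norm_rpow hr hs]
  exact (lintegral_enorm_rpow_mul_enorm_rpow_le hr hs hp hrs hf.1 hg.1).trans_lt
    (ENNReal.mul_lt_top (ENNReal.rpow_lt_top_of_nonneg hr hf.eLpNorm_ne_top)
      (ENNReal.rpow_lt_top_of_nonneg hs hg.eLpNorm_ne_top))

theorem integral_norm_rpow_mul_norm_rpow_le {r s p : ℝ} (hr : 0 ≤ r) (hs : 0 ≤ s) (hp : 0 < p)
    (hrs : r + s = p) {f : Ω → E} {g : Ω → F} (hf : MemLp f (ENNReal.ofReal p) μ)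
    (hg : MemLp g (ENNReal.ofReal p) μ) :
    ∫ ω, ‖f ω‖ ^ r * ‖g ω‖ ^ s ∂μ
      ≤ lpNorm f (ENNReal.ofReal p) μ ^ r * lpNorm g (ENNReal.ofReal p) μ ^ s := by
  have hint := integrable_norm_rpow_mul_norm_rpow hr hs hp hrs hf hg
  rw [← ENNReal.ofReal_le_ofReal_iff (mul_nonneg (Real.rpow_nonneg lpNorm_nonneg r)
      (Real.rpow_nonneg lpNorm_nonneg s)),
    ofReal_integral_eq_lintegral_ofReal hint (ae_of_all _ fun ω => by positivity),
    ENNReal.ofReal_mul (Real.rpow_nonneg lpNorm_nonneg r),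
    ← ENNReal.ofReal_rpow_of_nonneg lpNorm_nonneg hr,
    ← ENNReal.ofReal_rpow_of_nonneg lpNorm_nonneg hs, ofReal_lpNorm hf, ofReal_lpNorm hg]
  simp only [ofReal_norm_rpow_mul_norm_rpow hr hs]
  exact lintegral_enorm_rpow_mul_enorm_rpow_le hr hs hp hrs hf.1 hg.1

theorem rpow_add_le_sq_add_rpow_half {p C s d : ℝ} (hp : 2 ≤ p) (hC : 1 ≤ C) (hs : 0 ≤ s)
    (hd : 0 ≤ d) :
    s ^ p + C * (s ^ (p - 2) * d ^ 2 + d ^ p) ≤ (s ^ 2 + 2 * C * d ^ 2) ^ (p / 2) := by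
  have hp2 : 1 ≤ p / 2 := by linarith
  have hd_part : C * d ^ p ≤ (C * d ^ 2) ^ (p / 2) := by
    rw [Real.mul_rpow (by positivity) (by positivity), ← rpow_eq_sq_rpow_half hd]
    gcongr
    exact Real.self_le_rpow_of_one_le hC hp2
  have hs_part : s ^ p + C * (s ^ (p - 2) * d ^ 2) ≤ (s ^ 2 + C * d ^ 2) ^ (p / 2) := by
    rcases hs.eq_or_lt with rfl | hs
    · rcases hp.eq_or_lt with rfl | hp
      · simp
      · simpa [Real.zero_rpow (by linarith : p ≠ 0), Real.zero_rpow (by linarith : p - 2 ≠ 0)]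
          using Real.rpow_nonneg (by positivity : 0 ≤ C * d ^ 2) (p / 2)
    set u := C * d ^ 2 / s ^ 2
    have hu : 0 ≤ u := by positivity
    calc s ^ p + C * (s ^ (p - 2) * d ^ 2) = s ^ p * (1 + u) := by
          rw [← rpow_sub_two_mul_sq hs.le (by linarith : p ≠ 0)]; simp only [u]; field_simp
      _ ≤ s ^ p * (1 + u) ^ (p / 2) := by
          gcongr
          exact Real.self_le_rpow_of_one_le (by linarith) hp2
      _ = (s ^ 2 + C * d ^ 2) ^ (p / 2) := by
          rw [rpow_eq_sq_rpow_half hs.le p, ← Real.mul_rpow (by positivity) (by positivity)]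
          congr 1; simp only [u]; field_simp
  calc s ^ p + C * (s ^ (p - 2) * d ^ 2 + d ^ p)
      ≤ (s ^ 2 + C * d ^ 2) ^ (p / 2) + (C * d ^ 2) ^ (p / 2) := by linarith
    _ ≤ (s ^ 2 + C * d ^ 2 + C * d ^ 2) ^ (p / 2) :=
        Real.add_rpow_le_rpow_add (by positivity) (by positivity) hp2
    _ = _ := by ring_nf

variable [InnerProductSpace ℝ E]

theorem integrable_norm_rpow_sub_two_mul_inner {p : ℝ} (hp : 2 ≤ p) {S D : Ω → E}
    (hS : MemLp S (ENNReal.ofReal p) μ) (hD : MemLp D (ENNReal.ofReal p) μ) :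
    Integrable (fun ω => ‖S ω‖ ^ (p - 2) * inner ℝ (S ω) (D ω)) μ := by
  refine (integrable_norm_rpow_mul_norm_rpow (r := p - 1) (s := 1) (by linarith) zero_le_one
    (by linarith) (by ring) hS hD).mono'
    ((hS.1.norm.aemeasurable.pow_const _).aestronglyMeasurable.mul (hS.1.inner hD.1))
    (ae_of_all _ fun ω => ?_)
  rw [norm_mul, Real.norm_of_nonneg (by positivity), Real.rpow_one,
    ← rpow_sub_two_mul_self (norm_nonneg _) (by linarith), mul_assoc]
  gcongr
  exact norm_inner_le_norm (S ω) (D ω)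

theorem exists_lpNorm_add_rpow_le {p : ℝ} (hp : 2 ≤ p) :
    ∃ C : ℝ, 1 ≤ C ∧ ∀ S D : Ω → E,
      MemLp S (ENNReal.ofReal p) μ → MemLp D (ENNReal.ofReal p) μ →
      ∫ ω, ‖S ω‖ ^ (p - 2) * inner ℝ (S ω) (D ω) ∂μ = 0 →
      lpNorm (S + D) (ENNReal.ofReal p) μ ^ p ≤ lpNorm S (ENNReal.ofReal p) μ ^ p
        + C * (lpNorm S (ENNReal.ofReal p) μ ^ (p - 2) * lpNorm D (ENNReal.ofReal p) μ ^ 2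
          + lpNorm D (ENNReal.ofReal p) μ ^ p) := by
  obtain ⟨C, hC, hpt⟩ := exists_norm_add_rpow_le (E := E) hp
  refine ⟨C, hC, fun S D hS hD hzero => ?_⟩
  have hp0 : 0 < p := by linarith
  have hnorm {f : Ω → E} (hf : MemLp f (ENNReal.ofReal p) μ) :
      Integrable (fun ω => ‖f ω‖ ^ p) μ := by
    simpa [hp0.le] using hf.integrable_norm_rpow (by simpa using hp0) ENNReal.ofReal_ne_top
  have hsq := integrable_norm_rpow_mul_norm_rpow (r := p - 2) (s := 2) (by linarith) zero_le_two
    hp0 (by ring) hS hD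
  have hholder := integral_norm_rpow_mul_norm_rpow_le (r := p - 2) (s := 2) (by linarith)
    zero_le_two hp0 (by ring) hS hD
  simp only [Real.rpow_two] at hsq hholder
  have hfirst := (integrable_norm_rpow_sub_two_mul_inner hp hS hD).const_mul p
  have hsecond : Integrable (fun ω => C * (‖S ω‖ ^ (p - 2) * ‖D ω‖ ^ 2 + ‖D ω‖ ^ p)) μ :=
    (hsq.add (hnorm hD)).const_mul C
  simp only [lpNorm_rpow_eq_integral_norm_rpow hp0, (hS.add hD).1, hS.1, hD.1]
  calc ∫ ω, ‖(S + D) ω‖ ^ p ∂μ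
      ≤ ∫ ω, (‖S ω‖ ^ p + p * (‖S ω‖ ^ (p - 2) * inner ℝ (S ω) (D ω))
          + C * (‖S ω‖ ^ (p - 2) * ‖D ω‖ ^ 2 + ‖D ω‖ ^ p)) ∂μ :=
        integral_mono (hnorm (hS.add hD)) (((hnorm hS).add hfirst).add hsecond)
          fun ω => hpt (S ω) (D ω)
    _ = ∫ ω, ‖S ω‖ ^ p ∂μ
          + C * (∫ ω, ‖S ω‖ ^ (p - 2) * ‖D ω‖ ^ 2 ∂μ + ∫ ω, ‖D ω‖ ^ p ∂μ) := by
        rw [integral_add (by exact (hnorm hS).add hfirst) hsecond,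
          integral_add (hnorm hS) hfirst, integral_const_mul, integral_const_mul,
          integral_add hsq (hnorm hD), hzero, mul_zero, add_zero]
    _ ≤ _ := by gcongr

variable [IsFiniteMeasure μ] [CompleteSpace E]

theorem integral_inner_eq_zero_of_condExp_eq_zero (hm : m ≤ m0) {f D : Ω → E}
    (hf : StronglyMeasurable[m] f) (hD : Integrable D μ) (hDm : μ[D | m] =ᵐ[μ] 0)
    (hfD : Integrable (fun ω => inner ℝ (f ω) (D ω)) μ) :
    ∫ ω, inner ℝ (f ω) (D ω) ∂μ = 0 := by
  have hpull := condExp_bilin_of_stronglyMeasurable_left (m := m) (innerSL ℝ) hf hfD hD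
  rw [← integral_condExp hm]
  refine integral_eq_zero_of_ae (hpull.trans ?_)
  filter_upwards [hDm] with ω hω
  simp [hω]

theorem exists_lpNorm_add_sq_le {p : ℝ} (hp : 2 ≤ p) :
    ∃ C : ℝ, 1 ≤ C ∧ ∀ (m : MeasurableSpace Ω) (S D : Ω → E), m ≤ m0 →
      MemLp S (ENNReal.ofReal p) μ → MemLp D (ENNReal.ofReal p) μ →
      StronglyMeasurable[m] S → μ[D | m] =ᵐ[μ] 0 →
      lpNorm (S + D) (ENNReal.ofReal p) μ ^ 2
        ≤ lpNorm S (ENNReal.ofReal p) μ ^ 2 + C * lpNorm D (ENNReal.ofReal p) μ ^ 2 := by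
  obtain ⟨C, hC, hadd⟩ := exists_lpNorm_add_rpow_le (μ := μ) (E := E) hp
  refine ⟨2 * C, by linarith, fun m S D hm hS hD hSm hDm => ?_⟩
  have hzero : ∫ ω, ‖S ω‖ ^ (p - 2) * inner ℝ (S ω) (D ω) ∂μ = 0 := by
    have hinner := integrable_norm_rpow_sub_two_mul_inner hp hS hD
    simp only [← real_inner_smul_left] at hinner ⊢
    exact integral_inner_eq_zero_of_condExp_eq_zero hm
      ((hSm.norm.measurable.pow_const _).stronglyMeasurable.smul hSm)
      (hD.integrable (by simp; linarith)) hDm hinner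
  have hle := (hadd S D hS hD hzero).trans
    (rpow_add_le_sq_add_rpow_half hp hC lpNorm_nonneg lpNorm_nonneg)
  rwa [rpow_eq_sq_rpow_half lpNorm_nonneg, Real.rpow_le_rpow_iff (by positivity) (by positivity)
    (by linarith)] at hle

end ConditionalTwoSmoothness

section Propagator

variable {R A M : Type*} [CommRing R] [Ring A] [Algebra R A]

open Polynomial in
/-- The product `∏_{k ≤ j < n} (1 + c_j a)`, which carries a solution of the linear recursion
`y_{j+1} = y_j + c_j a y_j` from time `k` to time `n` (Janson's `F_{k,n}(a)`). Its factors commute;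
evaluating a product of polynomials at `a` makes it a `Finset` product although `A` need not be
commutative. -/
noncomputable def propagator (a : A) (c : ℕ → R) (k n : ℕ) : A :=
  aeval a (∏ j ∈ Finset.Ico k n, (1 + C (c j) * X))

theorem propagator_self (a : A) (c : ℕ → R) (n : ℕ) : propagator a c n n = 1 := by
  simp [propagator]

theorem propagator_succ (a : A) (c : ℕ → R) {k n : ℕ} (hkn : k ≤ n) :
    propagator a c k (n + 1) = (1 + c n • a) * propagator a c k n := by
  rw [propagator, propagator, Finset.prod_Ico_succ_top hkn, mul_comm, map_mul]
  simp [Algebra.smul_def]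

theorem commute_propagator (a : A) (c : ℕ → R) (k n : ℕ) : Commute a (propagator a c k n) := by
  simpa [propagator] using
    (Commute.all Polynomial.X (∏ j ∈ Finset.Ico k n, (1 + .C (c j) * .X))).map
      (Polynomial.aeval (R := R) a)

theorem eq_sum_propagator_smul [AddCommGroup M] [Module A M] {a : A} {c : ℕ → R} {y d : ℕ → M}
    (hy0 : y 0 = 0) (hy : ∀ n, y (n + 1) = (1 + c n • a) • y n + d n) (n : ℕ) :
    y n = ∑ k ∈ Finset.range n, propagator a c (k + 1) n • d k := by
  induction n with
  | zero => simpa using hy0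
  | succ n ih =>
    rw [hy, ih, Finset.smul_sum, Finset.sum_range_succ, propagator_self, one_smul]
    congr 1
    refine Finset.sum_congr rfl fun k hk => ?_
    rw [smul_smul, propagator_succ a c (Finset.mem_range.1 hk)]

end Propagator

section Moments

variable {Ω E : Type*} {m0 : MeasurableSpace Ω} {μ : Measure Ω} [NormedAddCommGroup E]

theorem lpNorm_le_mul_lpNorm_of_ae_le_mul {F : Type*} [NormedAddCommGroup F] {p : ENNReal}
    {f : Ω → E} {g : Ω → F} {C : ℝ} (hC : 0 ≤ C) (hg : MemLp g p μ)
    (hfg : ∀ᵐ ω ∂μ, ‖f ω‖ ≤ C * ‖g ω‖) : lpNorm f p μ ≤ C * lpNorm g p μ := by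
  by_cases hf : AEStronglyMeasurable f μ
  · have hle := eLpNorm_le_mul_eLpNorm_of_ae_le_mul hfg p
    rw [← toReal_eLpNorm hf, ← toReal_eLpNorm hg.1, ← ENNReal.toReal_ofReal hC,
      ← ENNReal.toReal_mul]
    exact ENNReal.toReal_mono (ENNReal.mul_ne_top ENNReal.ofReal_ne_top hg.eLpNorm_ne_top) hle
  · rw [lpNorm_of_not_aestronglyMeasurable hf]
    exact mul_nonneg hC lpNorm_nonneg

theorem memLp_of_memLp_increment {p : ENNReal} {X : ℕ → Ω → E} (hX0 : MemLp (X 0) p μ)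
    (hX : ∀ n, MemLp (fun ω => X (n + 1) ω - X n ω) p μ) (n : ℕ) : MemLp (X n) p μ := by
  induction n with
  | zero => exact hX0
  | succ n ih =>
    convert ih.add (hX n) using 1
    ext ω
    simp

theorem lpNorm_le_add_nat_mul {p : ENNReal} (hp : 1 ≤ p) {X : ℕ → Ω → E} {K : ℝ}
    (hX : ∀ n, MemLp (X n) p μ) (hK : ∀ n, lpNorm (fun ω => X (n + 1) ω - X n ω) p μ ≤ K)
    (n : ℕ) : lpNorm (X n) p μ ≤ lpNorm (X 0) p μ + n * K := by
  induction n with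
  | zero => simp
  | succ n ih =>
    have hadd := lpNorm_add_le (g := fun ω => X (n + 1) ω - X n ω) (hX n) hp
    rw [show X n + (fun ω => X (n + 1) ω - X n ω) = X (n + 1) by ext; simp] at hadd
    push_cast
    linarith [hK n]

end Moments

section LinearRecursion

variable {Ω E : Type*} {m0 : MeasurableSpace Ω} {μ : Measure Ω}
  [NormedAddCommGroup E] [NormedSpace ℝ E]
  {ℱ : Filtration ℕ m0} {L : E →L[ℝ] E} {c : ℕ → ℝ} {X : ℕ → Ω → E}

/-- The increment of `X` after time `n` minus its conditional expectation `c_n L X_n` in a linear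
stochastic recursion with drift `L` and step sizes `c`. -/
def stepNoise (L : E →L[ℝ] E) (c : ℕ → ℝ) (X : ℕ → Ω → E) (n : ℕ) (ω : Ω) : E :=
  X (n + 1) ω - X n ω - c n • L (X n ω)

theorem stronglyMeasurable_stepNoise (hX : ∀ n, StronglyMeasurable[ℱ n] (X n)) (n : ℕ) :
    StronglyMeasurable[ℱ (n + 1)] (stepNoise L c X n) :=
  have hXn := (hX n).mono (ℱ.mono n.le_succ)
  ((hX (n + 1)).sub hXn).sub ((L.continuous.comp_stronglyMeasurable hXn).const_smul (c n))

theorem memLp_stepNoise {p : ENNReal} (hX : ∀ n, MemLp (X n) p μ) (n : ℕ) :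
    MemLp (stepNoise L c X n) p μ :=
  ((hX (n + 1)).sub (hX n)).sub ((L.comp_memLp' (hX n)).const_smul (c n))

theorem lpNorm_stepNoise_le {p : ENNReal} (hp : 1 ≤ p) (hX : ∀ n, MemLp (X n) p μ) (n : ℕ) :
    lpNorm (stepNoise L c X n) p μ
      ≤ lpNorm (fun ω => X (n + 1) ω - X n ω) p μ + |c n| * ‖L‖ * lpNorm (X n) p μ := by
  refine (lpNorm_sub_le ((hX (n + 1)).sub (hX n)) hp).trans (add_le_add le_rfl ?_)
  refine lpNorm_le_mul_lpNorm_of_ae_le_mul (by positivity) (hX n) (ae_of_all _ fun ω => ?_)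
  rw [norm_smul, Real.norm_eq_abs, mul_assoc]
  gcongr
  exact L.le_opNorm _

variable [CompleteSpace E]

theorem condExp_stepNoise [IsFiniteMeasure μ] (hX : ∀ n, StronglyMeasurable[ℱ n] (X n))
    (hXint : ∀ n, Integrable (X n) μ)
    (hcond : ∀ n, μ[fun ω => X (n + 1) ω - X n ω | ℱ n] =ᵐ[μ] fun ω => c n • L (X n ω)) (n : ℕ) :
    μ[stepNoise L c X n | ℱ n] =ᵐ[μ] 0 := by
  have hdrift : Integrable (fun ω => c n • L (X n ω)) μ :=
    (L.integrable_comp (hXint n)).smul (c n)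
  have hmeas : StronglyMeasurable[ℱ n] (fun ω => c n • L (X n ω)) :=
    (L.continuous.comp_stronglyMeasurable (hX n)).const_smul (c n)
  have hself := condExp_of_stronglyMeasurable (ℱ.le n) hmeas hdrift
  have hsub := condExp_sub ((hXint (n + 1)).sub (hXint n)) hdrift (ℱ n)
  filter_upwards [hsub, hcond n] with ω hω hcω
  simp only [Pi.sub_apply, hself] at hω
  exact hω.trans (sub_eq_zero.2 hcω)

theorem integral_succ_eq [IsFiniteMeasure μ] (hXint : ∀ n, Integrable (X n) μ)
    (hcond : ∀ n, μ[fun ω => X (n + 1) ω - X n ω | ℱ n] =ᵐ[μ] fun ω => c n • L (X n ω)) (n : ℕ) :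
    ∫ ω, X (n + 1) ω ∂μ = ∫ ω, X n ω ∂μ + c n • L (∫ ω, X n ω ∂μ) := by
  have hincr : ∫ ω, (X (n + 1) ω - X n ω) ∂μ = c n • L (∫ ω, X n ω ∂μ) := by
    rw [← integral_condExp (ℱ.le n), integral_congr_ae (hcond n), integral_smul,
      L.integral_comp_comm (hXint n)]
  rw [← hincr, integral_sub (hXint (n + 1)) (hXint n), add_sub_cancel]

theorem sub_integral_eq_sum_propagator_stepNoise [IsProbabilityMeasure μ] {x₀ : E}
    (hX0 : X 0 = fun _ => x₀) (hXint : ∀ n, Integrable (X n) μ)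
    (hcond : ∀ n, μ[fun ω => X (n + 1) ω - X n ω | ℱ n] =ᵐ[μ] fun ω => c n • L (X n ω)) (n : ℕ)
    (ω : Ω) :
    X n ω - ∫ ω', X n ω' ∂μ
      = ∑ k ∈ Finset.range n, propagator L c (k + 1) n (stepNoise L c X k ω) := by
  refine eq_sum_propagator_smul (a := L) (c := c) (y := fun n => X n ω - ∫ ω', X n ω' ∂μ)
    (d := fun n => stepNoise L c X n ω) (by simp [hX0]) (fun m => ?_) n
  simp only [integral_succ_eq hXint hcond, stepNoise, ContinuousLinearMap.smul_def,
    _root_.add_apply, one_apply_eq_self, _root_.smul_apply, smul_sub]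
  abel

end LinearRecursion

section MartingaleDifferences

variable {Ω E : Type*} {m0 : MeasurableSpace Ω} {μ : Measure Ω} [IsProbabilityMeasure μ]
  [NormedAddCommGroup E] [InnerProductSpace ℝ E] [CompleteSpace E]

theorem exists_lpNorm_sum_sq_le {p : ℝ} (hp : 2 ≤ p) :
    ∃ C : ℝ, 1 ≤ C ∧ ∀ (ℱ : Filtration ℕ m0) (D : ℕ → Ω → E),
      (∀ k, MemLp (D k) (ENNReal.ofReal p) μ) → (∀ k, StronglyMeasurable[ℱ (k + 1)] (D k)) →
      (∀ k, μ[D k | ℱ k] =ᵐ[μ] 0) → ∀ n,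
      lpNorm (∑ k ∈ Finset.range n, D k) (ENNReal.ofReal p) μ ^ 2
        ≤ C * ∑ k ∈ Finset.range n, lpNorm (D k) (ENNReal.ofReal p) μ ^ 2 := by
  obtain ⟨C, hC, hadd⟩ := exists_lpNorm_add_sq_le (μ := μ) (E := E) hp
  refine ⟨C, hC, fun ℱ D hD hDm hD0 n => ?_⟩
  induction n with
  | zero => simp
  | succ n ih =>
    have hS : StronglyMeasurable[ℱ n] (∑ k ∈ Finset.range n, D k) :=
      Finset.stronglyMeasurable_sum _ fun k hk => (hDm k).mono (ℱ.mono (Finset.mem_range.1 hk))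
    rw [Finset.sum_range_succ, Finset.sum_range_succ, mul_add]
    exact (hadd (ℱ n) _ (D n) (ℱ.le n) (memLp_finsetSum' _ fun k _ => hD k) (hD n) hS
      (hD0 n)).trans (by gcongr)

theorem exists_lpNorm_sub_integral_sq_le {ℱ : Filtration ℕ m0} {L : E →L[ℝ] E} {c : ℕ → ℝ}
    {X : ℕ → Ω → E} {p : ℝ} (hp : 2 ≤ p) {x₀ : E}
    (hX0 : X 0 = fun _ => x₀) (hXm : ∀ n, StronglyMeasurable[ℱ n] (X n))
    (hX : ∀ n, MemLp (X n) (ENNReal.ofReal p) μ)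
    (hcond : ∀ n, μ[fun ω => X (n + 1) ω - X n ω | ℱ n] =ᵐ[μ] fun ω => c n • L (X n ω)) :
    ∃ C : ℝ, 1 ≤ C ∧ ∀ n,
      lpNorm (fun ω => X n ω - ∫ ω', X n ω' ∂μ) (ENNReal.ofReal p) μ ^ 2
        ≤ C * ∑ k ∈ Finset.range n, lpNorm (fun ω => propagator L c (k + 1) n
            (stepNoise L c X k ω)) (ENNReal.ofReal p) μ ^ 2 := by
  obtain ⟨C, hC, hsum⟩ := exists_lpNorm_sum_sq_le (μ := μ) (E := E) hp
  refine ⟨C, hC, fun n => ?_⟩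
  have hXint k : Integrable (X k) μ := (hX k).integrable (by simp; linarith)
  have hnoise k := memLp_stepNoise (L := L) (c := c) hX k
  convert hsum ℱ (fun k ω => propagator L c (k + 1) n (stepNoise L c X k ω)) ?_ ?_ ?_ n using 2
  · congr 1
    funext ω
    rw [Finset.sum_apply, sub_integral_eq_sum_propagator_stepNoise hX0 hXint hcond]
  · exact fun k => (propagator L c (k + 1) n).comp_memLp' (hnoise k)
  · exact fun k => (propagator L c (k + 1) n).continuous.comp_stronglyMeasurable
      (stronglyMeasurable_stepNoise hXm k)
  · intro k
    refine ((propagator L c (k + 1) n).comp_condExp_comm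
      ((hnoise k).integrable (by simp; linarith))).symm.trans ?_
    filter_upwards [condExp_stepNoise hXm hXint hcond k] with ω hω
    simp [hω]

end MartingaleDifferences

section Growth

theorem norm_one_add_mul_le_exp (c : ℝ) (z : ℂ) :
    ‖1 + (c : ℂ) * z‖ ≤ Real.exp (z.re * c + ‖z‖ ^ 2 / 2 * c ^ 2) := by
  have hsq : ‖1 + (c : ℂ) * z‖ ^ 2 = 2 * (z.re * c + ‖z‖ ^ 2 / 2 * c ^ 2) + 1 := by
    simp only [Complex.sq_norm, Complex.normSq_apply, Complex.add_re, Complex.add_im,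
      Complex.one_re, Complex.one_im, Complex.re_ofReal_mul, Complex.im_ofReal_mul]
    ring
  refine le_of_sq_le_sq ?_ (Real.exp_nonneg _)
  rw [hsq, ← Real.exp_nat_mul, Nat.cast_ofNat]
  exact Real.add_one_le_exp _

theorem neg_half_le_re_mul_add (c : ℝ) (z : ℂ) :
    -(1 / 2) ≤ z.re * c + ‖z‖ ^ 2 / 2 * c ^ 2 := by
  have hsq : z.re ^ 2 ≤ ‖z‖ ^ 2 := sq_le_sq' (by linarith [(abs_le.1 z.abs_re_le_norm).1])
    z.re_le_norm
  nlinarith [sq_nonneg (z.re * c + 1), mul_le_mul_of_nonneg_right hsq (sq_nonneg c)]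

theorem exists_one_add_pow_le_exp (N : ℕ) {ε : ℝ} (hε : 0 < ε) :
    ∃ C : ℝ, 0 ≤ C ∧ ∀ t : ℝ, 0 ≤ t → (1 + t) ^ N ≤ C * Real.exp (ε * t) := by
  refine ⟨N.factorial * Real.exp ε / ε ^ N, by positivity, fun t ht => ?_⟩
  have h := Real.pow_div_factorial_le_exp (ε * (1 + t)) (by positivity) N
  rw [div_le_iff₀ (by positivity), mul_pow, mul_add, mul_one, Real.exp_add] at h
  rw [div_mul_eq_mul_div, le_div_iff₀ (by positivity)]
  linarith

variable {V : Type*} [NormedAddCommGroup V] [NormedSpace ℂ V] {f : Module.End ℂ V} {c : ℕ → ℝ}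

theorem propagator_succ_apply (f : Module.End ℂ V) (c : ℕ → ℂ) (z : ℂ) {k n : ℕ} (hkn : k ≤ n)
    (v : V) :
    propagator f c k (n + 1) v
      = (1 + c n * z) • propagator f c k n v
        + c n • propagator f c k n ((f - algebraMap ℂ _ z) v) := by
  have hcomm := DFunLike.congr_fun (commute_propagator f c k n).eq v
  simp only [Module.End.mul_apply] at hcomm
  simp only [propagator_succ f c hkn, Module.End.mul_apply, LinearMap.add_apply,
    Module.End.one_apply, LinearMap.smul_apply, LinearMap.sub_apply,
    Module.algebraMap_end_apply, map_sub, map_smul, hcomm]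
  module

theorem exp_mul_add_mul_le {c T G : ℝ} (hc : 0 ≤ c) (hT : 0 ≤ T) (hG : 0 ≤ G) (z : ℂ) (N : ℕ) :
    Real.exp (z.re * c + ‖z‖ ^ 2 / 2 * c ^ 2) * (G * (1 + Real.exp (1 / 2) * T) ^ (N + 1))
        + c * (G * (1 + Real.exp (1 / 2) * T) ^ N)
      ≤ G * Real.exp (z.re * c + ‖z‖ ^ 2 / 2 * c ^ 2)
        * (1 + Real.exp (1 / 2) * (T + c)) ^ (N + 1) := by
  have hδ := neg_half_le_re_mul_add c z
  set δ := z.re * c + ‖z‖ ^ 2 / 2 * c ^ 2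
  have hKδ : 1 ≤ Real.exp (1 / 2) * Real.exp δ := by
    rw [← Real.exp_add, Real.one_le_exp_iff]
    linarith
  set K := Real.exp (1 / 2)
  have : 0 ≤ K := Real.exp_nonneg _
  calc Real.exp δ * (G * (1 + K * T) ^ (N + 1)) + c * (G * (1 + K * T) ^ N)
      ≤ Real.exp δ * (G * (1 + K * T) ^ (N + 1))
        + c * (K * Real.exp δ * (G * (1 + K * T) ^ N)) := by
          have := le_mul_of_one_le_left (b := G * (1 + K * T) ^ N) (by positivity) hKδ
          gcongr
    _ = G * Real.exp δ * ((1 + K * T) ^ N * (1 + K * (T + c))) := by ring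
    _ ≤ G * Real.exp δ * (1 + K * (T + c)) ^ (N + 1) := by
          rw [pow_succ _ N]
          gcongr
          linarith

-- Each factor `1 + c_j z` costs `exp (c_j Re z + O(c_j²))`, and a Jordan block of length `N + 1`
-- adds a polynomial factor of degree `N` in the elapsed time.
theorem norm_propagator_apply_le (hc : ∀ j, 0 ≤ c j) {z : ℂ} {k n : ℕ} (hkn : k ≤ n) {N : ℕ} {v : V}
    {M : ℝ} (hv : ((f - algebraMap ℂ _ z) ^ (N + 1)) v = 0)
    (hM : ∀ i : ℕ, ‖((f - algebraMap ℂ _ z) ^ i) v‖ ≤ M) :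
    ‖propagator f (fun j => (c j : ℂ)) k n v‖
      ≤ M * Real.exp (∑ j ∈ Finset.Ico k n, (z.re * c j + ‖z‖ ^ 2 / 2 * c j ^ 2))
        * (1 + Real.exp (1 / 2) * ∑ j ∈ Finset.Ico k n, c j) ^ N := by
  induction n, hkn using Nat.le_induction generalizing N v with
  | base => simpa [propagator_self] using hM 0
  | succ n hkn ih =>
    have hM0 : 0 ≤ M := (norm_nonneg _).trans (hM 0)
    have hT : 0 ≤ ∑ j ∈ Finset.Ico k n, c j := Finset.sum_nonneg fun j _ => hc j
    have hmain := (norm_smul_le (1 + (c n : ℂ) * z) _).trans <|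
      mul_le_mul (norm_one_add_mul_le_exp (c n) z) (ih hv hM) (norm_nonneg _) (Real.exp_nonneg _)
    rw [propagator_succ_apply f _ z hkn, Finset.sum_Ico_succ_top hkn, Finset.sum_Ico_succ_top hkn,
      Real.exp_add, ← mul_assoc M]
    refine (norm_add_le_of_le hmain (norm_smul_le _ _)).trans ?_
    rw [Complex.norm_real, Real.norm_of_nonneg (hc n)]
    cases N with
    | zero =>
      have hgv : (f - algebraMap ℂ _ z) v = 0 := by simpa using hv
      simp [hgv, mul_comm]
    | succ N =>
      refine le_trans ?_ (exp_mul_add_mul_le (hc n) hT (by positivity) z N)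
      gcongr
      · exact hc n
      · refine ih ?_ fun i => ?_
        · rwa [← Module.End.mul_apply, ← pow_succ]
        · rw [← Module.End.mul_apply, ← pow_succ]
          exact hM (i + 1)

/-- The vectors whose images under the propagators of `f` grow at most like `exp (r T) (1 + T) ^ ν`,
where `T = ∑_{k ≤ j < n} c_j` is the time elapsed between steps `k` and `n`. -/
def growthSubmodule (f : Module.End ℂ V) (c : ℕ → ℝ) (r : ℝ) (ν : ℕ) : Submodule ℂ V where
  carrier := {v | ∃ C : ℝ, ∀ k n, k ≤ n → ‖propagator f (fun j => (c j : ℂ)) k n v‖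
    ≤ C * (Real.exp (r * ∑ j ∈ Finset.Ico k n, c j) * (1 + ∑ j ∈ Finset.Ico k n, c j) ^ ν)}
  zero_mem' := ⟨0, fun k n _ => by simp⟩
  add_mem' := by
    rintro v w ⟨C, hC⟩ ⟨D, hD⟩
    refine ⟨C + D, fun k n hkn => ?_⟩
    rw [map_add, add_mul]
    exact norm_add_le_of_le (hC k n hkn) (hD k n hkn)
  smul_mem' := by
    rintro z v ⟨C, hC⟩
    refine ⟨‖z‖ * C, fun k n hkn => ?_⟩
    rw [map_smul, norm_smul, mul_assoc]
    gcongr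
    exact hC k n hkn

theorem growthSubmodule_le_of_lt (hc : ∀ j, 0 ≤ c j) {r r' : ℝ} (hr : r < r') (ν ν' : ℕ) :
    growthSubmodule f c r ν ≤ growthSubmodule f c r' ν' := by
  rintro v ⟨C, hC⟩
  obtain ⟨D, hD, hexp⟩ := exists_one_add_pow_le_exp ν (sub_pos.2 hr)
  refine ⟨|C| * D, fun k n hkn => (hC k n hkn).trans ?_⟩
  have hT : 0 ≤ ∑ j ∈ Finset.Ico k n, c j := Finset.sum_nonneg fun j _ => hc j
  set T := ∑ j ∈ Finset.Ico k n, c j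
  calc C * (Real.exp (r * T) * (1 + T) ^ ν)
      ≤ |C| * (Real.exp (r * T) * (D * Real.exp ((r' - r) * T))) := by
        gcongr
        · exact le_abs_self C
        · exact hexp T hT
    _ = |C| * D * (Real.exp (r' * T) * 1) := by
        rw [show r' * T = r * T + (r' - r) * T by ring, Real.exp_add]; ring
    _ ≤ |C| * D * (Real.exp (r' * T) * (1 + T) ^ ν') := by
        gcongr
        exact one_le_pow₀ (by linarith)

theorem growthSubmodule_mono (hc : ∀ j, 0 ≤ c j) (r : ℝ) {ν ν' : ℕ} (hν : ν ≤ ν') :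
    growthSubmodule f c r ν ≤ growthSubmodule f c r ν' := by
  rintro v ⟨C, hC⟩
  refine ⟨|C|, fun k n hkn => (hC k n hkn).trans ?_⟩
  have hT : 0 ≤ ∑ j ∈ Finset.Ico k n, c j := Finset.sum_nonneg fun j _ => hc j
  gcongr
  · exact le_abs_self C
  · linarith

theorem ker_pow_le_growthSubmodule (hc : ∀ j, 0 ≤ c j) (hc2 : Summable fun j => c j ^ 2) (z : ℂ)
    (ν : ℕ) :
    LinearMap.ker ((f - algebraMap ℂ _ z) ^ (ν + 1)) ≤ growthSubmodule f c z.re ν := by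
  intro v hv
  rw [LinearMap.mem_ker] at hv
  obtain ⟨M, hM⟩ : ∃ M, ∀ i : ℕ, ‖((f - algebraMap ℂ _ z) ^ i) v‖ ≤ M := by
    refine ⟨∑ i ∈ Finset.range (ν + 1), ‖((f - algebraMap ℂ _ z) ^ i) v‖, fun i => ?_⟩
    rcases lt_or_ge i (ν + 1) with hi | hi
    · exact Finset.single_le_sum (f := fun i => ‖((f - algebraMap ℂ _ z) ^ i) v‖)
        (fun _ _ => norm_nonneg _) (Finset.mem_range.2 hi)
    · rw [← Nat.sub_add_cancel hi, pow_add, Module.End.mul_apply, hv, map_zero, norm_zero]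
      positivity
  have hM0 : 0 ≤ M := (norm_nonneg _).trans (hM 0)
  refine ⟨M * Real.exp (‖z‖ ^ 2 / 2 * ∑' j, c j ^ 2) * Real.exp (1 / 2) ^ ν, fun k n hkn => ?_⟩
  refine (norm_propagator_apply_le hc hkn hv hM).trans ?_
  have hT : 0 ≤ ∑ j ∈ Finset.Ico k n, c j := Finset.sum_nonneg fun j _ => hc j
  have hS : ∑ j ∈ Finset.Ico k n, c j ^ 2 ≤ ∑' j, c j ^ 2 :=
    hc2.sum_le_tsum _ fun j _ => sq_nonneg (c j)
  rw [Finset.sum_add_distrib, ← Finset.mul_sum, ← Finset.mul_sum, Real.exp_add]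
  set T := ∑ j ∈ Finset.Ico k n, c j
  set K := Real.exp (1 / 2)
  have hK : 1 + K * T ≤ K * (1 + T) := by linarith [Real.one_le_exp (one_half_pos (α := ℝ)).le]
  calc M * (Real.exp (z.re * T) * Real.exp (‖z‖ ^ 2 / 2 * ∑ j ∈ Finset.Ico k n, c j ^ 2))
        * (1 + K * T) ^ ν
      ≤ M * (Real.exp (z.re * T) * Real.exp (‖z‖ ^ 2 / 2 * ∑' j, c j ^ 2))
        * (K * (1 + T)) ^ ν := by gcongr
    _ = _ := by rw [mul_pow]; ring

end Growth

section GeneralizedEigenspaces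

open Module.End

variable {K V : Type*} [Field K] [AddCommGroup V] [Module K V] {f : Module.End K V}
  {α : V →ₗ[K] K} {b : K}

theorem apply_sub_smul_pow_apply (hα : α ∘ₗ f = b • α) (z : K) (k : ℕ) (v : V) :
    α (((f - z • 1) ^ k) v) = (b - z) ^ k * α v := by
  induction k with
  | zero => simp
  | succ k ih =>
    have hf (x : V) : α (f x) = b * α x := by simpa using DFunLike.congr_fun hα x
    rw [pow_succ', Module.End.mul_apply, LinearMap.sub_apply, map_sub, hf, LinearMap.smul_apply,
      map_smul, Module.End.one_apply, ih, smul_eq_mul, pow_succ']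
    ring

theorem maxGenEigenspace_le_ker (hα : α ∘ₗ f = b • α) {z : K} (hz : z ≠ b) :
    f.maxGenEigenspace z ≤ LinearMap.ker α := by
  intro v hv
  obtain ⟨k, hk⟩ := (mem_maxGenEigenspace f z v).1 hv
  have h := apply_sub_smul_pow_apply hα z k v
  rw [hk, map_zero] at h
  exact (mul_eq_zero.1 h.symm).resolve_left (pow_ne_zero k (sub_ne_zero.2 hz.symm))

variable [FiniteDimensional K V]

theorem maxGenEigenspace_eq_bot_of_notMem_spectrum {z : K} (hz : z ∉ spectrum K f) :
    f.maxGenEigenspace z = ⊥ := by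
  contrapose! hz
  exact hasEigenvalue_iff_mem_spectrum.1
    ((hasUnifEigenvalue_iff_hasUnifEigenvalue_one (k := ⊤) (by simp)).1 hz)

theorem isCompl_maxGenEigenspace_iSup [IsAlgClosed K] (f : Module.End K V) (z : K) :
    IsCompl (f.maxGenEigenspace z) (⨆ y, ⨆ _ : y ≠ z, f.maxGenEigenspace y) where
  disjoint := f.independent_maxGenEigenspace z
  codisjoint := by
    rw [codisjoint_iff, ← iSup_split_single, iSup_maxGenEigenspace_eq_top]

theorem ker_le_iSup_maxGenEigenspace [IsAlgClosed K] (hα : α ∘ₗ f = b • α) (hα0 : α ≠ 0)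
    (hb : Module.finrank K (f.maxGenEigenspace b) ≤ 1) :
    LinearMap.ker α ≤ ⨆ z, ⨆ _ : z ≠ b, f.maxGenEigenspace z := by
  have hcompl := isCompl_maxGenEigenspace_iSup f b
  have hle : ⨆ z, ⨆ _ : z ≠ b, f.maxGenEigenspace z ≤ LinearMap.ker α :=
    iSup₂_le fun z hz => maxGenEigenspace_le_ker hα hz
  intro v hv
  obtain ⟨x, hx, y, hy, rfl⟩ := Submodule.mem_sup.1 (hcompl.sup_eq_top ▸ Submodule.mem_top (x := v))
  suffices x = 0 by rwa [this, zero_add]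
  by_contra hx0
  have hαx : α x = 0 := by
    have hαy : α y = 0 := hle hy
    simpa [hαy] using hv
  have hbker : f.maxGenEigenspace b ≤ LinearMap.ker α := by
    intro w hw
    have hx0' : (⟨x, hx⟩ : f.maxGenEigenspace b) ≠ 0 := by simpa using hx0
    have hb1 := hb.antisymm (Module.finrank_pos_iff_exists_ne_zero.2 ⟨_, hx0'⟩)
    obtain ⟨t, ht⟩ := exists_smul_eq_of_finrank_eq_one hb1 hx0' ⟨w, hw⟩
    have ht' : t • x = w := congrArg Subtype.val ht
    rw [LinearMap.mem_ker, ← ht', map_smul, hαx, smul_zero]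
  exact hα0 (LinearMap.ker_eq_top.1 (top_le_iff.1 (hcompl.sup_eq_top ▸ sup_le hbker hle)))

end GeneralizedEigenspaces

section SpectralProjection

open Module.End

variable {q : ℕ} {A P : Matrix (Fin q) (Fin q) ℂ} {z : ℂ}

theorem mem_maxGenEigenspace_toLin'_iff {v : Fin q → ℂ} :
    v ∈ maxGenEigenspace (Matrix.toLin' A) z ↔ ((A - z • 1) ^ q) *ᵥ v = 0 := by
  rw [maxGenEigenspace_eq_genEigenspace_finrank, mem_genEigenspace_nat, LinearMap.mem_ker,
    Module.finrank_fin_fun, ← Matrix.toLin'_apply, Matrix.toLin'_pow, map_sub, map_smul,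
    Matrix.toLin'_one]
  rfl

variable (A z) in
theorem exists_isSpectralProj : ∃ P, IsSpectralProj A z P := by
  have hcompl := isCompl_maxGenEigenspace_iSup (Matrix.toLin' A) z
  refine ⟨LinearMap.toMatrix' (Submodule.projection _ _ hcompl), fun v hv => ?_,
    fun y hy v hv => ?_⟩
  · rw [LinearMap.toMatrix'_mulVec]
    exact Submodule.projection_apply_of_mem_left hcompl (mem_maxGenEigenspace_toLin'_iff.2 hv)
  · rw [LinearMap.toMatrix'_mulVec]
    exact Submodule.projection_apply_of_mem_right hcompl
      (Submodule.mem_iSup_of_mem y (Submodule.mem_iSup_of_mem hy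
        (mem_maxGenEigenspace_toLin'_iff.2 hv)))

theorem IsSpectralProj.pow_mulVec (hP : IsSpectralProj A z P) {v : Fin q → ℂ}
    (hv : ((A - z • 1) ^ q) *ᵥ v = 0) (k : ℕ) :
    (((A - z • 1) * P) ^ k) *ᵥ v = ((A - z • 1) ^ k) *ᵥ v := by
  induction k generalizing v with
  | zero => simp
  | succ k ih =>
    have hv' : ((A - z • 1) ^ q) *ᵥ ((A - z • 1) *ᵥ v) = 0 := by
      rw [Matrix.mulVec_mulVec, ← pow_succ, pow_succ', ← Matrix.mulVec_mulVec, hv,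
        Matrix.mulVec_zero]
    rw [pow_succ, pow_succ, ← Matrix.mulVec_mulVec, ← Matrix.mulVec_mulVec, hP.1 v hv, ih hv',
      Matrix.mulVec_mulVec]

theorem IsSpectralProj.isNilpotent (hP : IsSpectralProj A z P) :
    IsNilpotent ((A - z • 1) * P) := by
  refine ⟨q + 1, Matrix.toLin'.injective ?_⟩
  rw [map_zero, ← LinearMap.ker_eq_top, ← top_le_iff,
    ← (isCompl_maxGenEigenspace_iSup (Matrix.toLin' A) z).sup_eq_top]
  refine sup_le (fun v hv => ?_) (iSup₂_le fun y hy v hv => ?_)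
  · rw [mem_maxGenEigenspace_toLin'_iff] at hv
    rw [LinearMap.mem_ker, Matrix.toLin'_apply, hP.pow_mulVec hv, pow_succ', ← Matrix.mulVec_mulVec,
      hv, Matrix.mulVec_zero]
  · rw [mem_maxGenEigenspace_toLin'_iff] at hv
    rw [LinearMap.mem_ker, Matrix.toLin'_apply, pow_succ, ← Matrix.mulVec_mulVec,
      ← Matrix.mulVec_mulVec, hP.2 y hy v hv, Matrix.mulVec_zero, Matrix.mulVec_zero]

theorem exists_nilIndexOf (h : IsNilpotent ((A - z • 1) * P)) : ∃ ν, NilIndexOf A z P ν := by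
  rcases subsingleton_or_nontrivial (Matrix (Fin q) (Fin q) ℂ) with _ | _
  · exact ⟨0, Subsingleton.elim _ _, .inl rfl⟩
  · exact ⟨_, pow_eq_zero_of_le (by omega) (pow_nilpotencyClass h),
      .inr (pow_pred_nilpotencyClass h)⟩

theorem IsSpectralProj.maxGenEigenspace_le_ker_pow (hP : IsSpectralProj A z P) {m : ℕ}
    (hm : ((A - z • 1) * P) ^ m = 0) :
    maxGenEigenspace (Matrix.toLin' A) z
      ≤ LinearMap.ker ((Matrix.toLin' A - algebraMap ℂ _ z) ^ m) := by
  intro v hv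
  rw [mem_maxGenEigenspace_toLin'_iff] at hv
  have h := hP.pow_mulVec hv m
  rw [hm, Matrix.zero_mulVec, ← Matrix.toLin'_apply, Matrix.toLin'_pow, map_sub, map_smul,
    Matrix.toLin'_one] at h
  exact h.symm

end SpectralProjection

section SecondEigenvalue

open Module.End

variable {q : ℕ} {A : Matrix (Fin q) (Fin q) ℂ} {b : ℝ} {α : (Fin q → ℂ) →ₗ[ℂ] ℂ}

theorem ker_le_of_forall_memSecondEigSet (hα : α ∘ₗ Matrix.toLin' A = (b : ℂ) • α) (hα0 : α ≠ 0)
    {S : Submodule ℂ (Fin q → ℂ)}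
    (hS : ∀ z, MemSecondEigSet A b z → maxGenEigenspace (Matrix.toLin' A) z ≤ S) :
    LinearMap.ker α ≤ S := by
  have hne (z : ℂ) (hz : z ≠ b) : maxGenEigenspace (Matrix.toLin' A) z ≤ S := by
    by_cases hs : z ∈ spectrum ℂ A
    · exact hS z (.inl ⟨hz, hs⟩)
    · rw [maxGenEigenspace_eq_bot_of_notMem_spectrum (by rwa [Matrix.spectrum_toLin'])]
      exact bot_le
  by_cases hm : 2 ≤ A.charpoly.rootMultiplicity (b : ℂ)
  · refine le_top.trans ((iSup_maxGenEigenspace_eq_top (Matrix.toLin' A)).ge.trans (iSup_le ?_))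
    intro z
    by_cases hz : z = b
    · exact hS z (.inr ⟨hz, hm⟩)
    · exact hne z hz
  · refine (ker_le_iSup_maxGenEigenspace hα hα0 ?_).trans (iSup₂_le hne)
    rw [LinearMap.finrank_maxGenEigenspace_eq, Matrix.charpoly_toLin']
    omega

theorem ker_le_growthSubmodule (hα : α ∘ₗ Matrix.toLin' A = (b : ℂ) • α) (hα0 : α ≠ 0)
    {c : ℕ → ℝ} (hc : ∀ j, 0 ≤ c j) (hc2 : Summable fun j => c j ^ 2) {r : ℝ} {ν : ℕ}
    (hr : ∀ z, MemSecondEigSet A b z → z.re ≤ r)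
    (hν : ∀ z P ν', MemSecondEigSet A b z → z.re = r → IsSpectralProj A z P → NilIndexOf A z P ν' →
      ν' ≤ ν) :
    LinearMap.ker α ≤ growthSubmodule (Matrix.toLin' A) c r ν := by
  refine ker_le_of_forall_memSecondEigSet hα hα0 fun z hz => ?_
  obtain ⟨P, hP⟩ := exists_isSpectralProj A z
  obtain ⟨ν', hν'⟩ := exists_nilIndexOf hP.isNilpotent
  refine (hP.maxGenEigenspace_le_ker_pow hν'.1).trans
    ((ker_pow_le_growthSubmodule hc hc2 z ν').trans ?_)
  rcases (hr z hz).lt_or_eq with hlt | rfl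
  · exact growthSubmodule_le_of_lt hc hlt ν' ν
  · exact growthSubmodule_mono hc _ (hν z P ν' hz rfl hP hν')

end SecondEigenvalue

section Complexification

variable {E V : Type*} [NormedAddCommGroup E] [NormedSpace ℝ E] [NormedAddCommGroup V]
  [NormedSpace ℝ V] [NormedSpace ℂ V] [IsScalarTower ℝ ℂ V] {L : E →L[ℝ] E} {f : Module.End ℂ V}
  {ι : E →ₗ[ℝ] V}

theorem map_propagator (hι : ∀ v, ι (L v) = f (ι v)) (c : ℕ → ℝ) {k n : ℕ} (hkn : k ≤ n) (v : E) :
    ι (propagator L c k n v) = propagator f (fun j => (c j : ℂ)) k n (ι v) := by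
  induction n, hkn using Nat.le_induction with
  | base => simp only [propagator_self, Module.End.one_apply, one_apply_eq_self]
  | succ n hkn ih =>
    rw [propagator_succ L c hkn, propagator_succ f _ hkn, mul_apply_eq_comp,
      Module.End.mul_apply, ← ih]
    simpa [hι, -Complex.coe_smul] using (algebraMap_smul ℂ (c n) _).symm

theorem exists_norm_propagator_apply_le [FiniteDimensional ℝ E] (hι : ∀ v, ι (L v) = f (ι v))
    (hinj : Function.Injective ι) {c : ℕ → ℝ} (hc : ∀ j, 0 ≤ c j) (r : ℝ) (ν : ℕ) :
    ∃ C : ℝ, ∀ k n, k ≤ n → ∀ v, ι v ∈ growthSubmodule f c r ν → ‖propagator L c k n v‖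
      ≤ C * (Real.exp (r * ∑ j ∈ Finset.Ico k n, c j) * (1 + ∑ j ∈ Finset.Ico k n, c j) ^ ν)
        * ‖v‖ := by
  set φ : ℕ → ℕ → ℝ := fun k n =>
    Real.exp (r * ∑ j ∈ Finset.Ico k n, c j) * (1 + ∑ j ∈ Finset.Ico k n, c j) ^ ν
  have hφ (k n : ℕ) : 0 < φ k n := by
    have hT : 0 ≤ ∑ j ∈ Finset.Ico k n, c j := Finset.sum_nonneg fun j _ => hc j
    positivity
  let W : Submodule ℝ E := ((growthSubmodule f c r ν).restrictScalars ℝ).comap ι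
  let g : {i : ℕ × ℕ // i.1 ≤ i.2} → W →L[ℝ] E := fun i =>
    (φ i.1.1 i.1.2)⁻¹ • (propagator L c i.1.1 i.1.2).comp W.subtypeL
  have hg (i) (v : W) : ‖g i v‖ = (φ i.1.1 i.1.2)⁻¹ * ‖propagator L c i.1.1 i.1.2 v‖ := by
    simp [g, norm_smul, abs_of_pos (hφ i.1.1 i.1.2)]
  obtain ⟨K, -, hK⟩ := ι.exists_antilipschitzWith (LinearMap.ker_eq_bot.2 hinj)
  obtain ⟨C, hC⟩ : ∃ C, ∀ i, ‖g i‖ ≤ C := banach_steinhaus fun v => by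
    obtain ⟨D, hD⟩ := v.2
    refine ⟨K * D, fun i => ?_⟩
    rw [hg, inv_mul_le_iff₀ (hφ _ _)]
    calc ‖propagator L c i.1.1 i.1.2 v‖ ≤ K * ‖ι (propagator L c i.1.1 i.1.2 v)‖ :=
          ZeroHomClass.bound_of_antilipschitz ι hK _
      _ ≤ K * (D * φ i.1.1 i.1.2) := by
          rw [map_propagator hι c i.2]
          gcongr
          exact hD _ _ i.2
      _ = φ i.1.1 i.1.2 * (K * D) := by ring
  refine ⟨C, fun k n hkn v hv => ?_⟩
  have h := (g ⟨(k, n), hkn⟩).le_of_opNorm_le (hC _) ⟨v, hv⟩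
  rw [hg, inv_mul_le_iff₀ (hφ _ _)] at h
  exact h.trans_eq (by rw [Submodule.coe_norm]; ring)

variable {n : Type*}

/-- The real-linear inclusion of Euclidean space into its complexification `n → ℂ`, on which `A`
has its complex eigenvectors. -/
noncomputable def complexify : EuclideanSpace ℝ n →ₗ[ℝ] (n → ℂ) :=
  Complex.ofRealCLM.toLinearMap.compLeft n ∘ₗ (WithLp.linearEquiv 2 ℝ (n → ℝ)).toLinearMap

theorem complexify_apply (v : EuclideanSpace ℝ n) (i : n) : complexify v i = (v i : ℂ) := rfl

theorem complexify_injective : Function.Injective (complexify (n := n)) := by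
  intro v w h
  ext i
  exact Complex.ofReal_injective (congrFun h i)

variable [Fintype n] [DecidableEq n]

theorem complexify_toEuclideanCLM (A : Matrix n n ℝ) (v : EuclideanSpace ℝ n) :
    complexify (Matrix.toEuclideanCLM (𝕜 := ℝ) A v)
      = Matrix.toLin' (A.map fun x : ℝ => (x : ℂ)) (complexify v) := by
  ext i
  simp [complexify_apply, Matrix.mulVec, dotProduct]

end Complexification

section HarmonicSteps

variable {w b : ℝ}

theorem summable_inv_add_nat_mul_sq (hw : 0 < w) (hb : 0 < b) :
    Summable fun j : ℕ => (w + j * b)⁻¹ ^ 2 := by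
  have h := ((Real.summable_one_div_nat_add_rpow (w / b) 2).2 one_lt_two).mul_left (b⁻¹ ^ 2)
  refine h.congr fun j => ?_
  rw [abs_of_pos (by positivity), Real.rpow_two]
  field_simp
  ring

theorem sum_Ico_inv_add_nat_mul_le_log (hw : 0 < w) (hb : 0 < b) {k n : ℕ} (hkn : k ≤ n) :
    ∑ j ∈ Finset.Ico (k + 1) (n + 1), (w + j * b)⁻¹
      ≤ b⁻¹ * Real.log ((w + n * b) / (w + k * b)) := by
  have hpos (j : ℕ) : 0 < w + j * b := by positivity
  induction n, hkn using Nat.le_induction with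
  | base => simp [div_self (hpos k).ne']
  | succ n hkn ih =>
    have hstep : (w + (n + 1 : ℕ) * b)⁻¹
        ≤ b⁻¹ * Real.log ((w + (n + 1 : ℕ) * b) / (w + n * b)) := by
      rw [le_inv_mul_iff₀ hb]
      refine le_of_eq_of_le ?_ (Real.one_sub_inv_le_log_of_pos (div_pos (hpos (n + 1)) (hpos n)))
      rw [inv_div, eq_sub_iff_add_eq, ← div_eq_mul_inv, ← add_div, div_eq_one_iff_eq (hpos _).ne']
      push_cast
      ring
    rw [Finset.sum_Ico_succ_top (by omega)]
    refine (add_le_add ih hstep).trans_eq ?_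
    rw [← mul_add, ← Real.log_mul (div_pos (hpos n) (hpos k)).ne'
      (div_pos (hpos (n + 1)) (hpos n)).ne', mul_comm (_ / _), div_mul_div_cancel₀ (hpos n).ne']

theorem exists_sum_Ico_inv_add_nat_mul_le_log (hw : 0 < w) (hb : 0 < b) :
    ∃ κ : ℝ, 1 ≤ κ ∧ ∀ k n : ℕ, k < n →
      ∑ j ∈ Finset.Ico (k + 1) n, (w + j * b)⁻¹ ≤ b⁻¹ * Real.log (κ * (n / (k + 1))) := by
  have hmin : 0 < min w b := lt_min hw hb
  refine ⟨(w + b) / min w b, ?_, fun k n hkn => ?_⟩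
  · rw [one_le_div hmin]
    exact (min_le_left w b).trans (le_add_of_nonneg_right hb.le)
  obtain ⟨m, rfl⟩ := Nat.exists_eq_add_of_lt hkn
  refine (sum_Ico_inv_add_nat_mul_le_log hw hb (Nat.le_add_right k m)).trans ?_
  have hnum : w + (k + m : ℕ) * b ≤ (w + b) * (k + m + 1 : ℕ) := by
    push_cast
    nlinarith [mul_nonneg hw.le (Nat.cast_nonneg (α := ℝ) k),
      mul_nonneg hw.le (Nat.cast_nonneg (α := ℝ) m)]
  have hden : min w b * (k + 1) ≤ w + k * b := by
    rw [mul_add_one, mul_comm, add_comm]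
    gcongr
    · exact min_le_left w b
    · exact min_le_right w b
  rw [div_mul_div_comm]
  gcongr

theorem half_le_log_natCast {n : ℕ} (hn : 2 ≤ n) : (1 / 2 : ℝ) ≤ Real.log n := by
  have hlog : Real.log 2 ≤ Real.log n := Real.log_le_log two_pos (by exact_mod_cast hn)
  linarith [Real.log_two_gt_d9]

theorem exists_exp_mul_one_add_pow_le (hw : 0 < w) (hb : 0 < b) {r : ℝ} (hr : 0 ≤ r) (ν : ℕ) :
    ∃ C : ℝ, 0 ≤ C ∧ ∀ k n : ℕ, 2 ≤ n → k < n →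
      Real.exp (r * ∑ j ∈ Finset.Ico (k + 1) n, (w + j * b)⁻¹)
          * (1 + ∑ j ∈ Finset.Ico (k + 1) n, (w + j * b)⁻¹) ^ ν
        ≤ C * (Real.log n ^ ν * (n / (k + 1)) ^ (r / b)) := by
  obtain ⟨κ, hκ, hT⟩ := exists_sum_Ico_inv_add_nat_mul_le_log hw hb
  have hlogκ : 0 ≤ Real.log κ := Real.log_nonneg hκ
  refine ⟨κ ^ (r / b) * (2 * (1 + b⁻¹ * Real.log κ) + b⁻¹) ^ ν, by positivity,
    fun k n hn hkn => ?_⟩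
  have hTkn := hT k n hkn
  have hT0 : 0 ≤ ∑ j ∈ Finset.Ico (k + 1) n, (w + j * b)⁻¹ :=
    Finset.sum_nonneg fun j _ => by positivity
  set T := ∑ j ∈ Finset.Ico (k + 1) n, (w + j * b)⁻¹
  have hn0 : (0 : ℝ) < n := by positivity
  have hexp : Real.exp (r * T) ≤ κ ^ (r / b) * (n / (k + 1)) ^ (r / b) := by
    rw [← Real.mul_rpow (by positivity) (by positivity), Real.rpow_def_of_pos (by positivity),
      Real.exp_le_exp]
    refine (mul_le_mul_of_nonneg_left hTkn hr).trans_eq ?_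
    ring
  have hlin : 1 + T ≤ (2 * (1 + b⁻¹ * Real.log κ) + b⁻¹) * Real.log n := by
    have hlogmul : Real.log (κ * (n / (k + 1))) ≤ Real.log κ + Real.log n := by
      rw [← Real.log_mul (by positivity) hn0.ne']
      gcongr
      exact div_le_self hn0.le (by linarith [Nat.cast_nonneg (α := ℝ) k])
    have hTlog : T ≤ b⁻¹ * (Real.log κ + Real.log n) := hTkn.trans (by gcongr)
    have hconst : 0 ≤ 1 + b⁻¹ * Real.log κ := by positivity
    nlinarith [half_le_log_natCast hn]
  calc Real.exp (r * T) * (1 + T) ^ ν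
      ≤ κ ^ (r / b) * (n / (k + 1)) ^ (r / b)
        * ((2 * (1 + b⁻¹ * Real.log κ) + b⁻¹) * Real.log n) ^ ν := by gcongr
    _ = _ := by rw [mul_pow]; ring

end HarmonicSteps

section RatioSums

theorem mul_rpow_neg_le_rpow_succ_sub {s : ℝ} (hs0 : 0 ≤ s) (hs1 : s < 1) (m : ℕ) :
    (1 - s) * ((m : ℝ) + 1) ^ (-s) ≤ ((m : ℝ) + 1) ^ (1 - s) - (m : ℝ) ^ (1 - s) := by
  have hm : (0 : ℝ) < m + 1 := by positivity
  have hinv : (m + 1 : ℝ)⁻¹ ≤ 1 := inv_le_one_of_one_le₀ (by linarith [Nat.cast_nonneg (α := ℝ) m])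
  have hbern : (1 + -(m + 1 : ℝ)⁻¹) ^ (1 - s) ≤ 1 + (1 - s) * -(m + 1 : ℝ)⁻¹ :=
    rpow_one_add_le_one_add_mul_self (by linarith) (by linarith) (by linarith)
  have hfactor : (m : ℝ) = (m + 1) * (1 + -(m + 1 : ℝ)⁻¹) := by field_simp; ring
  have hpow : (m : ℝ) ^ (1 - s) ≤ (m + 1 : ℝ) ^ (1 - s) * (1 + (1 - s) * -(m + 1 : ℝ)⁻¹) := by
    nth_rw 1 [hfactor]
    rw [Real.mul_rpow hm.le (by linarith)]
    gcongr
  have hneg : (m + 1 : ℝ) ^ (-s) = (m + 1 : ℝ) ^ (1 - s) * (m + 1 : ℝ)⁻¹ := by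
    rw [← div_eq_mul_inv, ← Real.rpow_sub_one hm.ne']
    congr 1
    ring
  rw [hneg]
  linarith

theorem sum_div_rpow_le_of_lt_one {s : ℝ} (hs0 : 0 ≤ s) (hs1 : s < 1) (n : ℕ) :
    ∑ k ∈ Finset.range n, ((n : ℝ) / (k + 1)) ^ s ≤ (1 - s)⁻¹ * n := by
  have htel (m : ℕ) : ∑ k ∈ Finset.range m, ((k : ℝ) + 1) ^ (-s) ≤ (1 - s)⁻¹ * m ^ (1 - s) := by
    rw [le_inv_mul_iff₀ (by linarith), Finset.mul_sum]
    refine (Finset.sum_le_sum fun k _ => mul_rpow_neg_le_rpow_succ_sub hs0 hs1 k).trans_eq ?_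
    have h := Finset.sum_range_sub (fun k : ℕ => (k : ℝ) ^ (1 - s)) m
    push_cast at h
    rw [h, Real.zero_rpow (by linarith), sub_zero]
  rcases n.eq_zero_or_pos with rfl | hn
  · simp
  have hn' : (0 : ℝ) < n := by exact_mod_cast hn
  calc ∑ k ∈ Finset.range n, ((n : ℝ) / (k + 1)) ^ s
      = n ^ s * ∑ k ∈ Finset.range n, ((k : ℝ) + 1) ^ (-s) := by
        rw [Finset.mul_sum]
        refine Finset.sum_congr rfl fun k _ => ?_
        rw [Real.div_rpow hn'.le (by positivity), Real.rpow_neg (by positivity), div_eq_mul_inv]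
    _ ≤ n ^ s * ((1 - s)⁻¹ * n ^ (1 - s)) := by gcongr; exact htel n
    _ = (1 - s)⁻¹ * n := by
        rw [mul_left_comm, ← Real.rpow_add hn', add_sub_cancel, Real.rpow_one]

theorem sum_div_le_mul_log {n : ℕ} (hn : 2 ≤ n) :
    ∑ k ∈ Finset.range n, (n : ℝ) / (k + 1) ≤ 3 * (n * Real.log n) := by
  have hharm : ∑ k ∈ Finset.range n, (n : ℝ) / (k + 1) = n * (harmonic n : ℝ) := by
    simp [harmonic, Finset.mul_sum, div_eq_mul_inv]
  rw [hharm, mul_left_comm]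
  gcongr
  linarith [harmonic_le_one_add_log n, half_le_log_natCast hn]

theorem exists_sum_div_rpow_le_of_one_lt {s : ℝ} (hs : 1 < s) :
    ∃ C : ℝ, 0 ≤ C ∧ ∀ n : ℕ, ∑ k ∈ Finset.range n, ((n : ℝ) / (k + 1)) ^ s ≤ C * n ^ s := by
  have hsum : Summable fun k : ℕ => (((k : ℝ) + 1) ^ s)⁻¹ := by
    simpa using (summable_nat_add_iff 1).2 (Real.summable_nat_rpow_inv.2 hs)
  refine ⟨∑' k : ℕ, (((k : ℝ) + 1) ^ s)⁻¹, tsum_nonneg fun k => by positivity, fun n => ?_⟩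
  calc ∑ k ∈ Finset.range n, ((n : ℝ) / (k + 1)) ^ s
      = (∑ k ∈ Finset.range n, (((k : ℝ) + 1) ^ s)⁻¹) * n ^ s := by
        rw [Finset.sum_mul]
        refine Finset.sum_congr rfl fun k _ => ?_
        rw [Real.div_rpow (by positivity) (by positivity), div_eq_inv_mul]
    _ ≤ _ := by
        gcongr
        exact hsum.sum_le_tsum _ fun k _ => by positivity

theorem sqrt_sum_div_rpow_le_of_lt_half {s : ℝ} (hs0 : 0 ≤ s) (hs : s < 1 / 2) (n : ℕ) :
    √(∑ k ∈ Finset.range n, ((n : ℝ) / (k + 1)) ^ (2 * s))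
      ≤ √(1 - 2 * s)⁻¹ * (n : ℝ) ^ (1 / 2 : ℝ) := by
  rw [← Real.sqrt_eq_rpow, ← Real.sqrt_mul (inv_nonneg.2 (by linarith))]
  exact Real.sqrt_le_sqrt (sum_div_rpow_le_of_lt_one (by linarith) (by linarith) n)

theorem sqrt_sum_div_le_mul_sqrt_log {n : ℕ} (hn : 2 ≤ n) :
    √(∑ k ∈ Finset.range n, (n : ℝ) / (k + 1))
      ≤ √3 * ((n : ℝ) ^ (1 / 2 : ℝ) * Real.log n ^ (1 / 2 : ℝ)) := by
  rw [← Real.sqrt_eq_rpow, ← Real.sqrt_eq_rpow, ← Real.sqrt_mul n.cast_nonneg,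
    ← Real.sqrt_mul zero_le_three]
  exact Real.sqrt_le_sqrt (sum_div_le_mul_log hn)

theorem exists_sqrt_sum_div_rpow_le_of_half_lt {s : ℝ} (hs : 1 / 2 < s) :
    ∃ C : ℝ, ∀ n : ℕ, √(∑ k ∈ Finset.range n, ((n : ℝ) / (k + 1)) ^ (2 * s)) ≤ C * n ^ s := by
  obtain ⟨C, hC0, hC⟩ := exists_sum_div_rpow_le_of_one_lt (by linarith : 1 < 2 * s)
  refine ⟨√C, fun n => (Real.sqrt_le_sqrt (hC n)).trans_eq ?_⟩
  rw [Real.sqrt_mul hC0, mul_comm 2 s, Real.rpow_mul n.cast_nonneg, Real.rpow_two,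
    Real.sqrt_sq (by positivity)]

end RatioSums

section BalancedRecursion

variable {Ω E : Type*} {m0 : MeasurableSpace Ω} {μ : Measure Ω}

theorem exists_forall_lpNorm_le_of_iSup_eLpNorm_lt_top [NormedAddCommGroup E] {p : ENNReal}
    {Y : ℕ → Ω → E} (hY : ∀ n, AEStronglyMeasurable (Y n) μ)
    (hmom : (⨆ n, eLpNorm (Y n) p μ) < ⊤) :
    (∀ n, MemLp (Y n) p μ) ∧ ∃ K : ℝ, ∀ n, lpNorm (Y n) p μ ≤ K := by
  have hle := le_iSup (fun n => eLpNorm (Y n) p μ)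
  refine ⟨fun n => ⟨hY n, (hle n).trans_lt hmom⟩, (⨆ n, eLpNorm (Y n) p μ).toReal, fun n => ?_⟩
  rw [← toReal_eLpNorm (hY n)]
  exact ENNReal.toReal_mono hmom.ne (hle n)

section Noise

variable [NormedAddCommGroup E] [NormedSpace ℝ E] {L : E →L[ℝ] E} {w b : ℝ} {X : ℕ → Ω → E}

theorem exists_lpNorm_stepNoise_le {p : ENNReal} (hp : 1 ≤ p) (hw : 0 < w) (hb : 0 < b) {K : ℝ}
    (hX : ∀ n, MemLp (X n) p μ) (hK : ∀ n, lpNorm (fun ω => X (n + 1) ω - X n ω) p μ ≤ K) :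
    ∃ K', ∀ n, lpNorm (stepNoise L (fun j => (w + j * b)⁻¹) X n) p μ ≤ K' := by
  have hK0 : 0 ≤ K := lpNorm_nonneg.trans (hK 0)
  have hM : 0 ≤ lpNorm (X 0) p μ := lpNorm_nonneg
  refine ⟨K + ‖L‖ * (lpNorm (X 0) p μ / w + K / b), fun n => ?_⟩
  have hpos : 0 < w + n * b := by positivity
  have hratio : (w + n * b)⁻¹ * (lpNorm (X 0) p μ + n * K) ≤ lpNorm (X 0) p μ / w + K / b := by
    rw [mul_add, inv_mul_eq_div, inv_mul_eq_div]
    refine add_le_add (by gcongr; nlinarith [n.cast_nonneg (α := ℝ)]) ?_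
    rw [div_le_div_iff₀ hpos hb]
    nlinarith [mul_nonneg hK0 hw.le]
  calc lpNorm (stepNoise L (fun j => (w + j * b)⁻¹) X n) p μ
      ≤ K + |(w + n * b)⁻¹| * ‖L‖ * (lpNorm (X 0) p μ + n * K) :=
        (lpNorm_stepNoise_le hp hX n).trans
          (by gcongr; exacts [hK n, lpNorm_le_add_nat_mul hp hX hK n])
    _ = K + ‖L‖ * ((w + n * b)⁻¹ * (lpNorm (X 0) p μ + n * K)) := by
        rw [abs_of_pos (inv_pos.2 hpos)]; ring
    _ ≤ K + ‖L‖ * (lpNorm (X 0) p μ / w + K / b) := by gcongr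

theorem ae_map_stepNoise_eq_zero (hw : 0 < w) (hb : 0 < b) {ℓ : E →ₗ[ℝ] ℝ}
    (hℓL : ∀ v, ℓ (L v) = b * ℓ v) (hℓX : ∀ n : ℕ, ∀ᵐ ω ∂μ, ℓ (X n ω) = w + n * b) (n : ℕ) :
    ∀ᵐ ω ∂μ, ℓ (stepNoise L (fun j => (w + j * b)⁻¹) X n ω) = 0 := by
  filter_upwards [hℓX n, hℓX (n + 1)] with ω hn hn1
  have : 0 < w + n * b := by positivity
  rw [stepNoise, map_sub, map_sub, map_smul, hℓL, hn, hn1, smul_eq_mul]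
  push_cast
  field_simp
  ring

end Noise

variable [NormedAddCommGroup E] [InnerProductSpace ℝ E] {ℱ : Filtration ℕ m0}
  {L : E →L[ℝ] E} {w b : ℝ} {ℓ : E →ₗ[ℝ] ℝ} {X : ℕ → Ω → E} {x₀ : E} {p : ℝ}
  [IsProbabilityMeasure μ]

theorem exists_lpNorm_sub_integral_le_sqrt_sum [CompleteSpace E] (hw : 0 < w) (hb : 0 < b)
    (hp : 2 ≤ p) (hℓL : ∀ v, ℓ (L v) = b * ℓ v) (hX0 : X 0 = fun _ => x₀)
    (hXm : ∀ n, StronglyMeasurable[ℱ n] (X n))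
    (hℓX : ∀ n : ℕ, ∀ᵐ ω ∂μ, ℓ (X n ω) = w + n * b)
    (hcond : ∀ n : ℕ, μ[fun ω => X (n + 1) ω - X n ω | ℱ n] =ᵐ[μ]
      fun ω => (w + n * b)⁻¹ • L (X n ω))
    (hmom : (⨆ n, eLpNorm (fun ω => X (n + 1) ω - X n ω) (ENNReal.ofReal p) μ) < ⊤) :
    (∀ n, MemLp (X n) (ENNReal.ofReal p) μ) ∧ ∃ C : ℝ, 0 ≤ C ∧ ∀ (n : ℕ) (φ : ℕ → ℝ),
      (∀ k < n, 0 ≤ φ k ∧ ∀ v, ℓ v = 0 →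
        ‖propagator L (fun j : ℕ => (w + j * b)⁻¹) (k + 1) n v‖ ≤ φ k * ‖v‖) →
      lpNorm (fun ω => X n ω - ∫ ω', X n ω' ∂μ) (ENNReal.ofReal p) μ
        ≤ C * √(∑ k ∈ Finset.range n, φ k ^ 2) := by
  have hp1 : 1 ≤ ENNReal.ofReal p := by
    rw [← ENNReal.ofReal_one]
    exact ENNReal.ofReal_le_ofReal (by linarith)
  have hmeas (n) : StronglyMeasurable (X n) := (hXm n).mono (ℱ.le n)
  obtain ⟨hincr, K, hK⟩ := exists_forall_lpNorm_le_of_iSup_eLpNorm_lt_top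
    (fun n => ((hmeas (n + 1)).sub (hmeas n)).aestronglyMeasurable) hmom
  have hX := memLp_of_memLp_increment (hX0 ▸ memLp_const x₀) hincr
  obtain ⟨K', hK'⟩ := exists_lpNorm_stepNoise_le (L := L) hp1 hw hb hX hK
  obtain ⟨C, hC1, hC⟩ := exists_lpNorm_sub_integral_sq_le hp hX0 hXm hX hcond
  refine ⟨hX, √(C * K' ^ 2), Real.sqrt_nonneg _, fun n φ hφ => ?_⟩
  have hterm (k) (hk : k < n) :
      lpNorm (fun ω => propagator L (fun j : ℕ => (w + j * b)⁻¹) (k + 1) n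
        (stepNoise L (fun j : ℕ => (w + j * b)⁻¹) X k ω)) (ENNReal.ofReal p) μ ≤ φ k * K' := by
    obtain ⟨hφ0, hφv⟩ := hφ k hk
    refine (lpNorm_le_mul_lpNorm_of_ae_le_mul hφ0 (memLp_stepNoise hX k) ?_).trans
      (mul_le_mul_of_nonneg_left (hK' k) hφ0)
    filter_upwards [ae_map_stepNoise_eq_zero hw hb hℓL hℓX k] with ω hω using hφv _ hω
  rw [← Real.sqrt_mul (by positivity)]
  refine Real.le_sqrt_of_sq_le ((hC n).trans ?_)
  rw [mul_assoc]
  refine mul_le_mul_of_nonneg_left ?_ (by linarith)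
  rw [Finset.mul_sum]
  refine Finset.sum_le_sum fun k hk => ?_
  rw [← mul_pow, mul_comm K']
  exact pow_le_pow_left₀ lpNorm_nonneg (hterm k (Finset.mem_range.1 hk)) 2

theorem exists_eLpNorm_sub_integral_le_of_mem_growthSubmodule [FiniteDimensional ℝ E] {V : Type*}
    [NormedAddCommGroup V] [NormedSpace ℝ V] [NormedSpace ℂ V] [IsScalarTower ℝ ℂ V]
    {f : Module.End ℂ V} {ι : E →ₗ[ℝ] V} (hι : ∀ v, ι (L v) = f (ι v))
    (hinj : Function.Injective ι) {r : ℝ} (hr : 0 ≤ r) {ν : ℕ}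
    (hgrowth : ∀ v, ℓ v = 0 → ι v ∈ growthSubmodule f (fun j => (w + j * b)⁻¹) r ν)
    {D : ℝ} {G : ℕ → ℝ} (hG : ∀ n : ℕ, 2 ≤ n →
      √(∑ k ∈ Finset.range n, ((n : ℝ) / (k + 1)) ^ (2 * (r / b))) ≤ D * G n)
    (hw : 0 < w) (hb : 0 < b)
    (hp : 2 ≤ p) (hℓL : ∀ v, ℓ (L v) = b * ℓ v) (hX0 : X 0 = fun _ => x₀)
    (hXm : ∀ n, StronglyMeasurable[ℱ n] (X n))
    (hℓX : ∀ n : ℕ, ∀ᵐ ω ∂μ, ℓ (X n ω) = w + n * b)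
    (hcond : ∀ n : ℕ, μ[fun ω => X (n + 1) ω - X n ω | ℱ n] =ᵐ[μ]
      fun ω => (w + n * b)⁻¹ • L (X n ω))
    (hmom : (⨆ n, eLpNorm (fun ω => X (n + 1) ω - X n ω) (ENNReal.ofReal p) μ) < ⊤) :
    ∃ C : ℝ, ∀ n : ℕ, 2 ≤ n →
      eLpNorm (fun ω => X n ω - ∫ ω', X n ω' ∂μ) (ENNReal.ofReal p) μ
        ≤ ENNReal.ofReal (C * G n * Real.log n ^ ν) := by
  have : CompleteSpace E := FiniteDimensional.complete ℝ E
  obtain ⟨hX, C₁, hC₁0, hC₁⟩ :=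
    exists_lpNorm_sub_integral_le_sqrt_sum hw hb hp hℓL hX0 hXm hℓX hcond hmom
  obtain ⟨C₂, hC₂⟩ := exists_norm_propagator_apply_le hι hinj
    (fun j : ℕ => inv_nonneg.2 (by positivity : 0 ≤ w + j * b)) r ν
  obtain ⟨C₃, hC₃0, hC₃⟩ := exists_exp_mul_one_add_pow_le hw hb hr ν
  refine ⟨C₁ * (|C₂| * C₃) * D, fun n hn => ?_⟩
  have hprop (k : ℕ) (hk : k < n) (v : E) (hv : ℓ v = 0) :
      ‖propagator L (fun j : ℕ => (w + j * b)⁻¹) (k + 1) n v‖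
        ≤ |C₂| * C₃ * Real.log n ^ ν * ((n : ℝ) / (k + 1)) ^ (r / b) * ‖v‖ := by
    have : 0 ≤ ∑ j ∈ Finset.Ico (k + 1) n, (w + j * b)⁻¹ :=
      Finset.sum_nonneg fun j _ => by positivity
    calc _ ≤ _ := hC₂ (k + 1) n hk v (hgrowth v hv)
      _ ≤ |C₂| * (C₃ * (Real.log n ^ ν * ((n : ℝ) / (k + 1)) ^ (r / b))) * ‖v‖ := by
        refine mul_le_mul_of_nonneg_right ?_ (norm_nonneg v)
        exact mul_le_mul (le_abs_self C₂) (hC₃ k n hn hk) (by positivity) (abs_nonneg C₂)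
      _ = _ := by ring
  have : 0 ≤ Real.log n := Real.log_natCast_nonneg n
  have hdev : MemLp (fun ω => X n ω - ∫ ω', X n ω' ∂μ) (ENNReal.ofReal p) μ :=
    (hX n).sub (memLp_const _)
  have hsq (k : ℕ) : (((n : ℝ) / (k + 1)) ^ (r / b)) ^ 2 = ((n : ℝ) / (k + 1)) ^ (2 * (r / b)) := by
    rw [mul_comm, Real.rpow_mul (by positivity), Real.rpow_two]
  rw [← ofReal_lpNorm hdev]
  refine ENNReal.ofReal_le_ofReal ((hC₁ n _ fun k hk => ⟨by positivity, hprop k hk⟩).trans ?_)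
  simp_rw [mul_pow _ (_ ^ (r / b) : ℝ), ← Finset.mul_sum, hsq]
  rw [Real.sqrt_mul (sq_nonneg _), Real.sqrt_sq (by positivity)]
  calc _ ≤ C₁ * (|C₂| * C₃ * Real.log n ^ ν * (D * G n)) := by gcongr; exact hG n hn
    _ = C₁ * (|C₂| * C₃) * D * G n * Real.log n ^ ν := by ring

end BalancedRecursion

section TotalActivity

/-- The total activity `a · v` of the urn composition `v`, for the activity vector `a`. -/
def totalActivity {ι : Type*} [Fintype ι] (a : ι → ℝ) : EuclideanSpace ℝ ι →ₗ[ℝ] ℝ :=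
  dotProductBilin ℝ ℝ a ∘ₗ (WithLp.linearEquiv 2 ℝ (ι → ℝ)).toLinearMap

theorem totalActivity_toEuclideanCLM {ι : Type*} [Fintype ι] [DecidableEq ι] {a : ι → ℝ} {b : ℝ}
    {A : Matrix ι ι ℝ} (hA : Matrix.vecMul a A = b • a) (v : EuclideanSpace ℝ ι) :
    totalActivity a (Matrix.toEuclideanCLM (𝕜 := ℝ) A v) = b * totalActivity a v := by
  change a ⬝ᵥ A *ᵥ WithLp.ofLp v = b * (a ⬝ᵥ WithLp.ofLp v)
  rw [Matrix.dotProduct_mulVec, hA, smul_dotProduct, smul_eq_mul]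

variable {q : ℕ} {a : Fin q → ℝ} {b : ℝ} {A : Matrix (Fin q) (Fin q) ℝ}

theorem complexify_mem_growthSubmodule (hA : Matrix.vecMul a A = b • a) (ha : a ≠ 0) {c : ℕ → ℝ}
    (hc : ∀ j, 0 ≤ c j) (hc2 : Summable fun j => c j ^ 2) {r : ℝ} {ν : ℕ}
    (hr : ∀ z, MemSecondEigSet (A.map fun x : ℝ => (x : ℂ)) b z → z.re ≤ r)
    (hν : ∀ z P ν', MemSecondEigSet (A.map fun x : ℝ => (x : ℂ)) b z → z.re = r →
      IsSpectralProj (A.map fun x : ℝ => (x : ℂ)) z P →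
      NilIndexOf (A.map fun x : ℝ => (x : ℂ)) z P ν' → ν' ≤ ν)
    {v : EuclideanSpace ℝ (Fin q)} (hv : totalActivity a v = 0) :
    complexify v ∈ growthSubmodule (Matrix.toLin' (A.map fun x : ℝ => (x : ℂ))) c r ν := by
  let α := dotProductBilin ℂ ℂ fun j => (a j : ℂ)
  have hα (v : EuclideanSpace ℝ (Fin q)) : α (complexify v) = (totalActivity a v : ℂ) :=
    (RingHom.map_dotProduct Complex.ofRealHom a (WithLp.ofLp v)).symm
  have hα0 : α ≠ 0 := by
    obtain ⟨j, hj⟩ := Function.ne_iff.1 ha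
    refine fun h => hj (Complex.ofReal_injective ?_)
    simpa [α] using LinearMap.congr_fun h (Pi.single j 1)
  have hαA : α ∘ₗ Matrix.toLin' (A.map fun x : ℝ => (x : ℂ)) = (b : ℂ) • α := by
    have hA' : Matrix.vecMul (fun j => (a j : ℂ)) (A.map fun x : ℝ => (x : ℂ))
        = (b : ℂ) • fun j => (a j : ℂ) := by
      ext j
      exact (RingHom.map_vecMul Complex.ofRealHom A a j).symm.trans (by simp [hA])
    refine LinearMap.ext fun z => ?_
    change (fun j => (a j : ℂ)) ⬝ᵥ (A.map fun x : ℝ => (x : ℂ)) *ᵥ z = _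
    rw [Matrix.dotProduct_mulVec, hA', smul_dotProduct]
    rfl
  exact ker_le_growthSubmodule hαA hα0 hc hc2 hr hν (by rw [LinearMap.mem_ker, hα, hv]; rfl)

end TotalActivity

theorem urn_centered_Lp_bound_general
    {q : ℕ} {Ω : Type*} {m0 : MeasurableSpace Ω}
    {μ : Measure Ω} [IsProbabilityMeasure μ] {ℱ : Filtration ℕ m0}
    {a : Fin q → ℝ} {b : ℝ} (hb : 0 < b)
    {A : Matrix (Fin q) (Fin q) ℝ} (hA : Matrix.vecMul a A = b • a)
    {X : ℕ → Ω → EuclideanSpace ℝ (Fin q)} (hadp : Adapted ℱ X)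
    {x₀ : EuclideanSpace ℝ (Fin q)} (hX0 : X 0 = fun _ => x₀) (hw₀ : 0 < ∑ j, a j * x₀ j)
    (hwn : ∀ n : ℕ, ∀ᵐ ω ∂μ, ∑ j, a j * X n ω j = (∑ j, a j * x₀ j) + (n : ℝ) * b)
    (hcond : ∀ n : ℕ, μ[fun ω => X (n + 1) ω - X n ω | ℱ n] =ᵐ[μ]
      fun ω => ((∑ j, a j * x₀ j) + (n : ℝ) * b)⁻¹ • (Matrix.toEuclideanCLM (𝕜 := ℝ) A (X n ω)))
    {p : ℝ} (hp : 2 ≤ p)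
    (hmom : (⨆ n : ℕ, eLpNorm (fun ω => X (n + 1) ω - X n ω) (ENNReal.ofReal p) μ) < ⊤)
    {r : ℝ} (hr : ∀ z : ℂ, MemSecondEigSet (A.map (fun x : ℝ => (x : ℂ))) b z → z.re ≤ r)
    {ν : ℕ} (hν : ∀ (z : ℂ) (P : Matrix (Fin q) (Fin q) ℂ) (ν' : ℕ),
      MemSecondEigSet (A.map (fun x : ℝ => (x : ℂ))) b z → z.re = r →
      IsSpectralProj (A.map (fun x : ℝ => (x : ℂ))) z P →
      NilIndexOf (A.map (fun x : ℝ => (x : ℂ))) z P ν' → ν' ≤ ν) :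
    ∃ C : ℝ, ∀ n : ℕ, 2 ≤ n →
      (r < b / 2 →
        eLpNorm (fun ω => X n ω - ∫ ω', X n ω' ∂μ) (ENNReal.ofReal p) μ
          ≤ ENNReal.ofReal (C * (n : ℝ) ^ (1 / 2 : ℝ))) ∧
      (r = b / 2 →
        eLpNorm (fun ω => X n ω - ∫ ω', X n ω' ∂μ) (ENNReal.ofReal p) μ
          ≤ ENNReal.ofReal (C * (n : ℝ) ^ (1 / 2 : ℝ) * Real.log n ^ ((ν : ℝ) + 1 / 2))) ∧
      (b / 2 < r →
        eLpNorm (fun ω => X n ω - ∫ ω', X n ω' ∂μ) (ENNReal.ofReal p) μ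
          ≤ ENNReal.ofReal (C * (n : ℝ) ^ (r / b) * Real.log n ^ ν)) := by
  set w := ∑ j, a j * x₀ j
  have hc (j : ℕ) : 0 ≤ (w + j * b)⁻¹ := by positivity
  have ha : a ≠ 0 := by rintro rfl; simp [w] at hw₀
  have hgrowth {v} := complexify_mem_growthSubmodule (v := v) hA ha hc
    (summable_inv_add_nat_mul_sq hw₀ hb) hr hν
  have hbound {s : ℝ} (hs : 0 ≤ s) {κ : ℕ} (hle : growthSubmodule _ _ r ν ≤ growthSubmodule _ _ s κ)
      {D : ℝ} {G : ℕ → ℝ} (hG : ∀ n : ℕ, 2 ≤ n → _ ≤ D * G n) :=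
    exists_eLpNorm_sub_integral_le_of_mem_growthSubmodule (complexify_toEuclideanCLM A)
      complexify_injective hs (fun _ hv => hle (hgrowth hv)) hG hw₀ hb hp
      (totalActivity_toEuclideanCLM hA) hX0 (fun n => (hadp n).stronglyMeasurable) hwn hcond hmom
  rcases lt_trichotomy r (b / 2) with hlt | heq | hgt
  · obtain ⟨s, hs, hsb⟩ := exists_between (max_lt hlt (half_pos hb))
    obtain ⟨hrs, hs0⟩ := max_lt_iff.1 hs
    obtain ⟨C, hC⟩ := hbound hs0.le (growthSubmodule_le_of_lt hc hrs ν 0) fun n _ =>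
      sqrt_sum_div_rpow_le_of_lt_half (by positivity) (by rw [div_lt_iff₀ hb]; linarith) n
    exact ⟨C, fun n hn => ⟨fun _ => by simpa using hC n hn, by grind, by grind⟩⟩
  · have hs : 2 * (r / b) = 1 := by rw [heq]; field_simp
    obtain ⟨C, hC⟩ := hbound (by linarith) le_rfl fun n hn => by
      simpa only [hs, Real.rpow_one] using sqrt_sum_div_le_mul_sqrt_log hn
    refine ⟨C, fun n hn => ⟨by grind, fun _ => (hC n hn).trans_eq ?_, by grind⟩⟩
    rw [← mul_assoc, mul_assoc _ (_ ^ (1 / 2 : ℝ) : ℝ), add_comm,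
      Real.rpow_add_natCast (by linarith [half_le_log_natCast hn])]
  · obtain ⟨D, hD⟩ := exists_sqrt_sum_div_rpow_le_of_half_lt
      (by rw [lt_div_iff₀ hb]; linarith : 1 / 2 < r / b)
    obtain ⟨C, hC⟩ := hbound (by linarith) le_rfl fun n _ => hD n
    exact ⟨C, fun n hn => ⟨by grind, by grind, fun _ => hC n hn⟩⟩

/-- Under the Pólya urn hypotheses, let p ≥ 2 and assume
sup_n ‖X_{n+1} − X_n‖_p < ∞. List the eigenvalues λ₁, …, λ_q of A with algebraic
multiplicity, ordered with decreasing real parts and, among eigenvalues of equal real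
part, by decreasing ν_λ; assume λ₁ = b. (Below, `lam2` is the second eigenvalue λ₂ of
this listing: it is a candidate for λ₂, has maximal real part among all candidates, and
maximal nilpotency index among the candidates of the same real part.) Then there is a
constant C (depending on the data and p but not on n) such that for every n ≥ 2:
‖X_n − E X_n‖_p ≤ C n^{1/2}                        if Re λ₂ < b/2;
‖X_n − E X_n‖_p ≤ C n^{1/2} (log n)^{ν_{λ₂} + 1/2} if Re λ₂ = b/2;
‖X_n − E X_n‖_p ≤ C n^{Re λ₂ / b} (log n)^{ν_{λ₂}} if Re λ₂ > b/2. -/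
theorem urn_centered_Lp_bound
    (q : ℕ) (hq : 2 ≤ q) {Ω : Type} {m0 : MeasurableSpace Ω}
    (μ : Measure Ω) [IsProbabilityMeasure μ] (ℱ : Filtration ℕ m0)
    (a : Fin q → ℝ) (b : ℝ) (hb : 0 < b)
    (A : Matrix (Fin q) (Fin q) ℝ) (hA : Matrix.vecMul a A = b • a)
    (X : ℕ → Ω → EuclideanSpace ℝ (Fin q)) (hadp : Adapted ℱ X)
    (hXint : ∀ n, Integrable (X n) μ)
    (x₀ : EuclideanSpace ℝ (Fin q)) (hX0 : X 0 = fun _ => x₀)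
    (hw₀ : 0 < ∑ j, a j * x₀ j)
    (hwn : ∀ n : ℕ, ∀ᵐ ω ∂μ, ∑ j, a j * X n ω j = (∑ j, a j * x₀ j) + (n : ℝ) * b)
    (hcond : ∀ n : ℕ, μ[fun ω => X (n + 1) ω - X n ω | ℱ n] =ᵐ[μ]
      fun ω => ((∑ j, a j * x₀ j) + (n : ℝ) * b)⁻¹ • (Matrix.toEuclideanCLM (𝕜 := ℝ) A (X n ω)))
    (p : ℝ) (hp : 2 ≤ p)
    (hmom : (⨆ n : ℕ, eLpNorm (fun ω => X (n + 1) ω - X n ω) (ENNReal.ofReal p) μ) < ⊤)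
    (hspec : (b : ℂ) ∈ spectrum ℂ (A.map (fun x : ℝ => (x : ℂ))))
    (hmax : ∀ mu ∈ spectrum ℂ (A.map (fun x : ℝ => (x : ℂ))), mu.re ≤ b)
    (lam2 : ℂ) (hlam2 : MemSecondEigSet (A.map (fun x : ℝ => (x : ℂ))) b lam2)
    (h2max : ∀ mu : ℂ, MemSecondEigSet (A.map (fun x : ℝ => (x : ℂ))) b mu → mu.re ≤ lam2.re)
    (P2 : Matrix (Fin q) (Fin q) ℂ)
    (hP2 : IsSpectralProj (A.map (fun x : ℝ => (x : ℂ))) lam2 P2)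
    (ν₂ : ℕ) (hν2 : NilIndexOf (A.map (fun x : ℝ => (x : ℂ))) lam2 P2 ν₂)
    (hν2max : ∀ (mu : ℂ) (P' : Matrix (Fin q) (Fin q) ℂ) (ν' : ℕ),
      MemSecondEigSet (A.map (fun x : ℝ => (x : ℂ))) b mu → mu.re = lam2.re →
      IsSpectralProj (A.map (fun x : ℝ => (x : ℂ))) mu P' →
      NilIndexOf (A.map (fun x : ℝ => (x : ℂ))) mu P' ν' → ν' ≤ ν₂) :
    ∃ C : ℝ, ∀ n : ℕ, 2 ≤ n →
      (lam2.re < b / 2 →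
        eLpNorm (fun ω => X n ω - ∫ ω', X n ω' ∂μ) (ENNReal.ofReal p) μ
          ≤ ENNReal.ofReal (C * (n : ℝ) ^ (1 / 2 : ℝ))) ∧
      (lam2.re = b / 2 →
        eLpNorm (fun ω => X n ω - ∫ ω', X n ω' ∂μ) (ENNReal.ofReal p) μ
          ≤ ENNReal.ofReal (C * (n : ℝ) ^ (1 / 2 : ℝ) * Real.log n ^ ((ν₂ : ℝ) + 1 / 2))) ∧
      (b / 2 < lam2.re →
        eLpNorm (fun ω => X n ω - ∫ ω', X n ω' ∂μ) (ENNReal.ofReal p) μ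
          ≤ ENNReal.ofReal (C * (n : ℝ) ^ (lam2.re / b) * Real.log n ^ ν₂)) :=
  urn_centered_Lp_bound_general hb hA hadp hX0 hw₀ hwn hcond hp hmom h2max hν2max
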